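/- arXiv:1402.6370 — 2 statements merged into one kernel-verified Lean document; each statement's English description precedes it below -/
import Mathlib

section
/- Let n ≥ 2, 1/2 < s < 1, and let L, C, η₀ > 0. Let u : ℝⁿ → ℝ be Lipschitz with constant L and semiconcave with constant C, and suppose u satisfies the ellipticity bound η₀ at a point x ∈ ℝⁿ. Then for every θ with 0 < θ < (μ₀/(n·μ₁))^{(n−1)/(2s)}, the infimum defining the fractional Monge–Ampère operator is not changed by restricting to uniformly elliptic matrices: inf{ L_A u(x) : A symmetric positive definite, det A = 1 } = inf{ L_A u(x) : A symmetric positive definite, det A = 1, every eigenvalue of A is ≥ θ }. -/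
open MeasureTheory

noncomputable def surfOmega (k : ℕ) : ℝ := 2 * Real.pi ^ ((k : ℝ) / 2) / Real.Gamma ((k : ℝ) / 2)

noncomputable def mu1 (s L C : ℝ) : ℝ := L ^ (2 - 2 * s) * (C / 2) ^ (2 * s - 1) / (2 * s - 1)

noncomputable def C1 (n : ℕ) (s L C : ℝ) : ℝ :=
  (Real.sqrt Real.pi * Real.Gamma (((n : ℝ) - 1) / 2 + s) / Real.Gamma ((n : ℝ) / 2 + s)) *
    (mu1 s L C * surfOmega (n - 1) / 2)

noncomputable def C2 (n : ℕ) (s : ℝ) : ℝ :=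
  surfOmega (n - 1) * Real.Gamma (((n : ℝ) - 1) / 2) * Real.Gamma (s + 1 / 2) /
    (2 * Real.Gamma ((n : ℝ) / 2 + s))

noncomputable def mu0 (n : ℕ) (s L C η₀ : ℝ) : ℝ :=
  C1 n s L C ^ (1 - (n : ℝ)) * (C2 n s)⁻¹ * (η₀ / 2) ^ (n : ℝ)

/-- Second-order increment `δ(u,x,y) = u(x+y) + u(x-y) - 2u(x)`. -/
noncomputable def delta2 {n : ℕ} (u : EuclideanSpace ℝ (Fin n) → ℝ)
    (x y : EuclideanSpace ℝ (Fin n)) : ℝ :=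
  u (x + y) + u (x - y) - 2 * u x

/-- Integrand `δ(u,x,y)/|A⁻¹ y|^(n+2s)`. -/
noncomputable def kernelA {n : ℕ} (s : ℝ) (A : Matrix (Fin n) (Fin n) ℝ)
    (u : EuclideanSpace ℝ (Fin n) → ℝ) (x y : EuclideanSpace ℝ (Fin n)) : ℝ :=
  delta2 u x y /
    ‖(EuclideanSpace.equiv (Fin n) ℝ).symm (A⁻¹.mulVec (EuclideanSpace.equiv (Fin n) ℝ y))‖ ^
      ((n : ℝ) + 2 * s)

/-- The linear operator `L_A u(x) = (1/2) ∫ δ(u,x,y)/|A⁻¹ y|^(n+2s) dy`. -/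
noncomputable def LA {n : ℕ} (s : ℝ) (A : Matrix (Fin n) (Fin n) ℝ)
    (u : EuclideanSpace ℝ (Fin n) → ℝ) (x : EuclideanSpace ℝ (Fin n)) : ℝ :=
  (1 / 2) * ∫ y, kernelA s A u x y

open Set in
theorem japan {V : Type*} [NormedAddCommGroup V] [InnerProductSpace ℝ V] [FiniteDimensional ℝ V]
    [MeasurableSpace V] [BorelSpace V] {p : ℝ} (hp : (Module.finrank ℝ V : ℝ) < p) :
    ∫ w : V, (1 + ‖w‖ ^ 2) ^ (-p / 2) =
      Real.pi ^ ((Module.finrank ℝ V : ℝ) / 2) * Real.Gamma ((p - Module.finrank ℝ V) / 2) /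
        Real.Gamma (p / 2) := by
  set d : ℝ := ((Module.finrank ℝ V : ℕ) : ℝ) with hd
  have hd0 : 0 ≤ d := by positivity
  have hp0 : 0 < p := by linarith
  have hΓ : 0 < Real.Gamma (p / 2) := Real.Gamma_pos_of_pos (by linarith)
  have key : ∀ w : V, ∫ t in Ioi (0:ℝ), t ^ (p / 2 - 1) * Real.exp (-((1 + ‖w‖ ^ 2) * t)) =
      (1 + ‖w‖ ^ 2) ^ (-p / 2) * Real.Gamma (p / 2) := by
    intro w
    rw [Real.integral_rpow_mul_exp_neg_mul_Ioi (by linarith) (by positivity)]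
    rw [one_div, Real.inv_rpow (by positivity), ← Real.rpow_neg (by positivity), neg_div]
  have hint : Integrable (Function.uncurry fun (w : V) (t : ℝ) =>
      t ^ (p / 2 - 1) * Real.exp (-((1 + ‖w‖ ^ 2) * t)))
      ((volume : Measure V).prod (volume.restrict (Ioi (0:ℝ)))) := by
    rw [integrable_prod_iff]
    · constructor
      · refine Filter.Eventually.of_forall fun w => ?_
        simp only [Function.uncurry]
        by_contra h
        have h2 := key w
        rw [integral_undef h] at h2
        have : 0 < (1 + ‖w‖ ^ 2) ^ (-p / 2) * Real.Gamma (p / 2) := by positivity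
        linarith
      · have : (fun w : V => ∫ t in Ioi (0:ℝ), ‖Function.uncurry (fun (w : V) (t : ℝ) =>
            t ^ (p / 2 - 1) * Real.exp (-((1 + ‖w‖ ^ 2) * t))) (w, t)‖) =
            fun w => (1 + ‖w‖ ^ 2) ^ (-p / 2) * Real.Gamma (p / 2) := by
          funext w
          rw [← key w]
          refine setIntegral_congr_fun measurableSet_Ioi fun t ht => ?_
          have ht' : (0:ℝ) < t := ht
          simp only [Function.uncurry]
          rw [Real.norm_of_nonneg (by positivity)]
        rw [this]
        exact (integrable_rpow_neg_one_add_norm_sq hp).mul_const _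
    · apply Measurable.aestronglyMeasurable
      simp only [Function.uncurry_def]
      fun_prop
  have sw := integral_integral_swap hint
  simp only [key] at sw
  rw [integral_mul_const] at sw
  have h2 : ∀ t ∈ Ioi (0:ℝ), ∫ w : V, t ^ (p / 2 - 1) * Real.exp (-((1 + ‖w‖ ^ 2) * t)) =
      Real.pi ^ (d / 2) * (Real.exp (-t) * t ^ ((p - d) / 2 - 1)) := by
    intro t ht
    have ht' : (0:ℝ) < t := ht
    have : ∀ w : V, t ^ (p / 2 - 1) * Real.exp (-((1 + ‖w‖ ^ 2) * t)) =
        (t ^ (p / 2 - 1) * Real.exp (-t)) * Real.exp (-t * ‖w‖ ^ 2) := by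
      intro w
      rw [mul_assoc, ← Real.exp_add]; ring_nf
    simp only [this]
    rw [integral_const_mul, GaussianFourier.integral_rexp_neg_mul_sq_norm ht', ← hd,
      Real.div_rpow Real.pi_pos.le ht'.le,
      show (p - d) / 2 - 1 = (p / 2 - 1) - d / 2 by ring, Real.rpow_sub ht' (p / 2 - 1)]
    ring
  rw [setIntegral_congr_fun measurableSet_Ioi h2, integral_const_mul,
    ← Real.Gamma_eq_integral (by linarith)] at sw
  rw [eq_div_iff hΓ.ne', sw]

open Set in
theorem polar_le {E : Type*} [NormedAddCommGroup E] [NormedSpace ℝ E] [FiniteDimensional ℝ E]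
    [MeasurableSpace E] [BorelSpace E] [Nontrivial E] (μ : Measure E) [μ.IsAddHaarMeasure]
    (f g : E → ℝ) (hf : Integrable f μ) (hg : Integrable g μ)
    (h : ∀ w : E, ‖w‖ = 1 →
      IntegrableOn (fun r : ℝ => r ^ (Module.finrank ℝ E - 1) * f (r • w)) (Ioi 0) →
      IntegrableOn (fun r : ℝ => r ^ (Module.finrank ℝ E - 1) * g (r • w)) (Ioi 0) →
      ∫ r in Ioi (0:ℝ), r ^ (Module.finrank ℝ E - 1) * f (r • w) ≤
        ∫ r in Ioi (0:ℝ), r ^ (Module.finrank ℝ E - 1) * g (r • w)) :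
    ∫ y, f y ∂μ ≤ ∫ y, g y ∂μ := by
  have A : ∀ F : E → ℝ, Integrable F μ →
      Integrable (fun q : Metric.sphere (0:E) 1 × Ioi (0:ℝ) => F (q.2.1 • q.1.1))
        (μ.toSphere.prod (Measure.volumeIoiPow (Module.finrank ℝ E - 1))) ∧
      ∫ y, F y ∂μ = ∫ q : Metric.sphere (0:E) 1 × Ioi (0:ℝ), F (q.2.1 • q.1.1)
        ∂(μ.toSphere.prod (Measure.volumeIoiPow (Module.finrank ℝ E - 1))) := by
    intro F hF
    have e : (fun x : ({(0)}ᶜ : Set E) => F x) =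
        (fun q : Metric.sphere (0:E) 1 × Ioi (0:ℝ) => F (q.2.1 • q.1.1)) ∘
          (homeomorphUnitSphereProd E) := by
      funext x
      simp only [Function.comp]
      congr 1
      have := congrArg Subtype.val ((homeomorphUnitSphereProd E).symm_apply_apply x)
      rw [homeomorphUnitSphereProd_symm_apply_coe] at this
      exact this.symm
    constructor
    · rw [← (μ.measurePreserving_homeomorphUnitSphereProd).integrable_comp_emb
        (Homeomorph.measurableEmbedding _), ← e]
      have := (integrableOn_iff_comap_subtypeVal (μ := μ) (f := F)
        (s := ({(0)}ᶜ : Set E)) (by measurability)).1 hF.integrableOn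
      exact this
    · rw [← (μ.measurePreserving_homeomorphUnitSphereProd).integral_comp
        (Homeomorph.measurableEmbedding _)
        (fun q : Metric.sphere (0:E) 1 × Ioi (0:ℝ) => F (q.2.1 • q.1.1))]
      rw [show (fun x => (fun q : Metric.sphere (0:E) 1 × Ioi (0:ℝ) => F (q.2.1 • q.1.1))
        (homeomorphUnitSphereProd E x)) = (fun x : ({(0)}ᶜ : Set E) => F x) from e.symm]
      rw [integral_subtype_comap (measurableSet_singleton _).compl F,
        restrict_compl_singleton]
  have B : ∀ F : ℝ → ℝ, ∀ k : ℕ, (Integrable (fun r : Ioi (0:ℝ) => F r) (Measure.volumeIoiPow k) ↔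
      IntegrableOn (fun r => r ^ k * F r) (Ioi 0)) ∧
      ∫ r : Ioi (0:ℝ), F r ∂(Measure.volumeIoiPow k) = ∫ r in Ioi (0:ℝ), r ^ k * F r := by
    intro F k
    have hm : Measurable fun r : Ioi (0:ℝ) => ((r : ℝ) ^ k).toNNReal := by fun_prop
    have e1 : Measure.volumeIoiPow k = (Measure.comap Subtype.val volume).withDensity
      (fun r : Ioi (0:ℝ) => (((r : ℝ) ^ k).toNNReal : ENNReal)) := rfl
    have e2 : ∀ r : Ioi (0:ℝ), ((r : ℝ) ^ k).toNNReal • F r = (r:ℝ) ^ k * F r := by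
      intro r
      have : (0:ℝ) < r := r.2
      rw [NNReal.smul_def, Real.coe_toNNReal _ (by positivity)]; rfl
    constructor
    · rw [e1, integrable_withDensity_iff_integrable_smul hm]
      simp only [e2]
      rw [integrableOn_iff_comap_subtypeVal measurableSet_Ioi]
      rfl
    · rw [e1, integral_withDensity_eq_integral_smul hm]
      simp only [e2]
      exact integral_subtype_comap measurableSet_Ioi (fun r => r ^ k * F r)
  obtain ⟨f1, f2⟩ := A f hf
  obtain ⟨g1, g2⟩ := A g hg
  rw [f2, g2, integral_prod _ f1, integral_prod _ g1]
  refine integral_mono_ae f1.integral_prod_left g1.integral_prod_left ?_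
  filter_upwards [f1.prod_right_ae, g1.prod_right_ae] with w hwf hwg
  have hw : ‖(w:E)‖ = 1 := by simp
  have := h w hw (((B (fun r => f (r • (w:E))) _).1).1 hwf) (((B (fun r => g (r • (w:E))) _).1).1 hwg)
  rw [← (B (fun r => f (r • (w:E))) _).2, ← (B (fun r => g (r • (w:E))) _).2] at this
  exact this

noncomputable def mmin (L C r : ℝ) : ℝ := min (C * r ^ 2) (2 * L * r)

open Set in
theorem mmin_int (s L C : ℝ) (hs : 1 / 2 < s) (hs1 : s < 1) (hL : 0 < L) (hC : 0 < C) :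
    IntegrableOn (fun r => mmin L C r * r ^ (-1 - 2 * s)) (Ioi 0) ∧
    ∫ r in Ioi (0:ℝ), mmin L C r * r ^ (-1 - 2 * s) = mu1 s L C / (1 - s) := by
  set R := 2 * L / C with hR
  have hR0 : 0 < R := by positivity
  have e1 : EqOn (fun r => mmin L C r * r ^ (-1 - 2 * s)) (fun r => C * r ^ (1 - 2 * s)) (Ioc 0 R) := by
    intro r ⟨h0, h1⟩
    have : C * r ≤ 2 * L := by rw [hR, le_div_iff₀ hC] at h1; linarith
    simp only [mmin]
    rw [min_eq_left (by nlinarith), show (1 - 2 * s) = (2:ℝ) + (-1 - 2 * s) by ring,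
      Real.rpow_add h0, Real.rpow_two]; ring
  have e2 : EqOn (fun r => mmin L C r * r ^ (-1 - 2 * s)) (fun r => 2 * L * r ^ (- 2 * s)) (Ioi R) := by
    intro r h1
    have h1' : R < r := h1
    have h0 : 0 < r := hR0.trans h1
    have : 2 * L ≤ C * r := by rw [hR, div_lt_iff₀ hC] at h1'; linarith
    simp only [mmin]
    rw [min_eq_right (by nlinarith), show (- 2 * s) = (1:ℝ) + (-1 - 2 * s) by ring,
      Real.rpow_add h0, Real.rpow_one]; ring
  have i1 : IntegrableOn (fun r => C * r ^ (1 - 2 * s)) (Ioc 0 R) := by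
    have := (intervalIntegral.intervalIntegrable_rpow' (a := 0) (b := R) (r := 1 - 2 * s)
      (by linarith)).const_mul C
    rwa [intervalIntegrable_iff_integrableOn_Ioc_of_le hR0.le] at this
  have i2 : IntegrableOn (fun r => 2 * L * r ^ (- 2 * s)) (Ioi R) :=
    (integrableOn_Ioi_rpow_of_lt (by linarith) hR0).const_mul _
  have j1 := i1.congr_fun e1.symm measurableSet_Ioc
  have j2 := i2.congr_fun e2.symm measurableSet_Ioi
  have hu : Ioc 0 R ∪ Ioi R = Ioi (0:ℝ) := Ioc_union_Ioi_eq_Ioi hR0.le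
  rw [← hu]
  refine ⟨j1.union j2, ?_⟩
  rw [setIntegral_union (Ioc_disjoint_Ioi le_rfl) measurableSet_Ioi j1 j2,
    setIntegral_congr_fun measurableSet_Ioc e1, setIntegral_congr_fun measurableSet_Ioi e2,
    integral_const_mul, integral_const_mul, ← intervalIntegral.integral_of_le hR0.le,
    integral_rpow (Or.inl (by linarith)), integral_Ioi_rpow_of_lt (by linarith) hR0,
    Real.zero_rpow (by linarith)]
  have a1 : R ^ (1 - 2 * s + 1) = R * R ^ (1 - 2 * s) := by
    rw [add_comm, Real.rpow_add hR0, Real.rpow_one]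
  have a2 : R ^ (-2 * s + 1) = R ^ (1 - 2 * s) := by ring_nf
  have a3 : R ^ (1 - 2 * s) = L ^ (1 - 2 * s) * (C / 2) ^ (2 * s - 1) := by
    rw [show R = L * (C / 2)⁻¹ by rw [hR]; field_simp, Real.mul_rpow hL.le (by positivity),
      Real.inv_rpow (by positivity), ← Real.rpow_neg (by positivity)]
    ring_nf
  have a4 : L ^ (2 - 2 * s) = L * L ^ (1 - 2 * s) := by
    rw [show 2 - 2 * s = 1 + (1 - 2 * s) by ring, Real.rpow_add hL, Real.rpow_one]
  rw [a1, a2, a3, mu1, a4, hR]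
  have b1 : 2 * s - 1 ≠ 0 := by linarith
  have b2 : 1 - s ≠ 0 := by linarith
  have b3 : 1 - 2 * s + 1 ≠ 0 := by linarith
  have b4 : -2 * s + 1 ≠ 0 := by linarith
  rw [show 1 - 2 * s + 1 = 2 * (1 - s) by ring, show -2 * s + 1 = -(2 * s - 1) by ring]
  field_simp
  ring

theorem japan_scaled {V : Type*} [NormedAddCommGroup V] [InnerProductSpace ℝ V]
    [FiniteDimensional ℝ V]
    [MeasurableSpace V] [BorelSpace V] {p β ρ : ℝ} (hp : (Module.finrank ℝ V : ℝ) < p)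
    (hβ : 0 < β) (hρ : 0 < ρ) :
    Integrable (fun v : V => (‖v‖ ^ 2 / β ^ 2 + ρ ^ 2) ^ (-p / 2)) ∧
    ∫ v : V, (‖v‖ ^ 2 / β ^ 2 + ρ ^ 2) ^ (-p / 2) =
      β ^ (Module.finrank ℝ V) * ρ ^ ((Module.finrank ℝ V : ℝ) - p) *
        ∫ w : V, (1 + ‖w‖ ^ 2) ^ (-p / 2) := by
  have e : ∀ v : V, (‖v‖ ^ 2 / β ^ 2 + ρ ^ 2) ^ (-p / 2) =
      ρ ^ (-p) * (fun w : V => (1 + ‖w‖ ^ 2) ^ (-p / 2)) ((β * ρ)⁻¹ • v) := by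
    intro v
    have : ‖v‖ ^ 2 / β ^ 2 + ρ ^ 2 = ρ ^ (2:ℝ) * (1 + ‖(β * ρ)⁻¹ • v‖ ^ 2) := by
      rw [norm_smul, Real.norm_of_nonneg (by positivity), Real.rpow_two]
      field_simp
      ring
    simp only
    rw [this, Real.mul_rpow (by positivity) (by positivity), ← Real.rpow_mul hρ.le]
    ring_nf
  simp only [e]
  constructor
  · exact ((integrable_rpow_neg_one_add_norm_sq hp).comp_smul (by positivity)).const_mul _
  · rw [integral_const_mul, Measure.integral_comp_smul volume
      (fun w : V => (1 + ‖w‖ ^ 2) ^ (-p / 2)) ((β * ρ)⁻¹), smul_eq_mul, abs_of_nonneg (by positivity),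
      inv_pow, inv_inv, mul_pow, Real.rpow_sub hρ, Real.rpow_natCast, Real.rpow_neg hρ.le]
    ring

open Set in
theorem prod_term {V W : Type*} [NormedAddCommGroup V] [InnerProductSpace ℝ V]
    [FiniteDimensional ℝ V] [MeasurableSpace V] [BorelSpace V]
    [NormedAddCommGroup W] [InnerProductSpace ℝ W]
    [FiniteDimensional ℝ W] [MeasurableSpace W] [BorelSpace W] [Nontrivial W]
    {p α β : ℝ} (hp : (Module.finrank ℝ V : ℝ) < p)
    (hα : 0 < α) (hβ : 0 < β) (q : ℝ → ℝ) (hq : Measurable q)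
    (hI : IntegrableOn (fun r : ℝ => r ^ (Module.finrank ℝ W - 1) *
      (q r * r ^ ((Module.finrank ℝ V : ℝ) - p))) (Ioi 0)) :
    Integrable (fun x : W × V => q ‖x.1‖ * (‖x.2‖ ^ 2 / β ^ 2 + ‖x.1‖ ^ 2 / α ^ 2) ^ (-p / 2)) ∧
    ∫ x : W × V, q ‖x.1‖ * (‖x.2‖ ^ 2 / β ^ 2 + ‖x.1‖ ^ 2 / α ^ 2) ^ (-p / 2) =
      β ^ (Module.finrank ℝ V) * α ^ (p - (Module.finrank ℝ V : ℝ)) *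
        (∫ w : V, (1 + ‖w‖ ^ 2) ^ (-p / 2)) *
        (Module.finrank ℝ W * (volume : Measure W).real (Metric.ball 0 1) *
        ∫ r in Ioi (0:ℝ), r ^ (Module.finrank ℝ W - 1) *
          (q r * r ^ ((Module.finrank ℝ V : ℝ) - p))) := by
  set c := β ^ (Module.finrank ℝ V) * α ^ (p - (Module.finrank ℝ V : ℝ)) *
        (∫ w : V, (1 + ‖w‖ ^ 2) ^ (-p / 2)) with hc
  have hpow : ∀ w : W, (‖w‖ / α) ^ ((Module.finrank ℝ V : ℝ) - p) =
      α ^ (p - (Module.finrank ℝ V : ℝ)) * ‖w‖ ^ ((Module.finrank ℝ V : ℝ) - p) := by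
    intro w
    rw [Real.div_rpow (norm_nonneg _) hα.le, ← neg_sub p, Real.rpow_neg hα.le, div_inv_eq_mul,
      mul_comm]
  have inner : ∀ w : W, w ≠ 0 →
      Integrable (fun v : V => (‖v‖ ^ 2 / β ^ 2 + ‖w‖ ^ 2 / α ^ 2) ^ (-p / 2)) ∧
      ∫ v : V, (‖v‖ ^ 2 / β ^ 2 + ‖w‖ ^ 2 / α ^ 2) ^ (-p / 2) =
        c * ‖w‖ ^ ((Module.finrank ℝ V : ℝ) - p) := by
    intro w hw
    have hw' : 0 < ‖w‖ := norm_pos_iff.2 hw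
    have := japan_scaled (V := V) hp hβ (div_pos hw' hα)
    simp only [div_pow] at this
    refine ⟨by simpa only [div_pow] using this.1, ?_⟩
    rw [this.2, hpow, hc]; ring
  have hrad : Integrable (fun w : W => q ‖w‖ * ‖w‖ ^ ((Module.finrank ℝ V : ℝ) - p)) :=
    (integrable_fun_norm_addHaar (volume : Measure W)
      (f := fun r => q r * r ^ ((Module.finrank ℝ V : ℝ) - p))).2 (by simpa using hI)
  have ae0 : ∀ᵐ w : W, w ≠ 0 := by
    simp [ae_iff]
  have hint : Integrable (fun x : W × V => q ‖x.1‖ *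
      (‖x.2‖ ^ 2 / β ^ 2 + ‖x.1‖ ^ 2 / α ^ 2) ^ (-p / 2)) := by
    rw [Measure.volume_eq_prod, integrable_prod_iff]
    · constructor
      · filter_upwards [ae0] with w hw
        exact (inner w hw).1.const_mul _
      · refine (hrad.norm.const_mul c).congr ?_
        filter_upwards [ae0] with w hw
        have : ∀ v : V, ‖q ‖w‖ * (‖v‖ ^ 2 / β ^ 2 + ‖w‖ ^ 2 / α ^ 2) ^ (-p / 2)‖ =
            |q ‖w‖| * (‖v‖ ^ 2 / β ^ 2 + ‖w‖ ^ 2 / α ^ 2) ^ (-p / 2) := by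
          intro v
          rw [norm_mul, Real.norm_eq_abs, Real.norm_of_nonneg (by positivity)]
        simp only [this]
        rw [integral_const_mul, (inner w hw).2, norm_mul, Real.norm_eq_abs,
          Real.norm_of_nonneg (by positivity)]
        ring
    · apply Measurable.aestronglyMeasurable
      fun_prop
  refine ⟨hint, ?_⟩
  rw [Measure.volume_eq_prod, integral_prod _ hint]
  have : (fun w : W => ∫ v : V, q ‖w‖ * (‖v‖ ^ 2 / β ^ 2 + ‖w‖ ^ 2 / α ^ 2) ^ (-p / 2))
      =ᵐ[volume] fun w => c * (q ‖w‖ * ‖w‖ ^ ((Module.finrank ℝ V : ℝ) - p)) := by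
    filter_upwards [ae0] with w hw
    rw [integral_const_mul, (inner w hw).2]
    ring
  rw [integral_congr_ae this, integral_const_mul,
    integral_fun_norm_addHaar (volume : Measure W)
      (fun r => q r * r ^ ((Module.finrank ℝ V : ℝ) - p))]
  simp only [smul_eq_mul, nsmul_eq_mul]
  ring

theorem surf_ball (k : ℕ) (hk : 1 ≤ k) :
    (k:ℝ) * (volume : Measure (EuclideanSpace ℝ (Fin k))).real (Metric.ball 0 1) = surfOmega k := by
  have : Nonempty (Fin k) := ⟨⟨0, hk⟩⟩
  have hk' : (0:ℝ) < k := by exact_mod_cast hk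
  have hG : 0 < Real.Gamma ((k:ℝ) / 2) := Real.Gamma_pos_of_pos (by positivity)
  rw [Measure.real, EuclideanSpace.volume_ball, surfOmega, Fintype.card_fin,
    Real.Gamma_add_one (by positivity)]
  rw [ENNReal.ofReal_one, one_pow, one_mul, ENNReal.toReal_ofReal (by positivity),
    Real.sqrt_eq_rpow, ← Real.rpow_natCast, ← Real.rpow_mul Real.pi_pos.le]
  rw [show 1 / 2 * (k:ℝ) = k / 2 by ring]
  field_simp

theorem mmin_meas (L C : ℝ) : Measurable (mmin L C) := by
  unfold mmin; fun_prop

open Set in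
theorem prod_ineq (k : ℕ) (hk : 1 ≤ k) (s L C a b : ℝ) (hs : 1 / 2 < s) (hs1 : s < 1)
    (hL : 0 < L) (hC : 0 < C) (ha : 0 < a) (hb : 0 < b) (hab : a ^ k * b = 1)
    (G : ℝ × EuclideanSpace ℝ (Fin k) → ℝ) (q : ℝ → ℝ) (hq : Measurable q)
    (hqe : ∀ t, q |t| = q t)
    (hG : ∀ t z, G (t, z) + G (t, -z) ≤ 2 * (mmin L C ‖z‖ + q t))
    (hGi : Integrable fun x : ℝ × EuclideanSpace ℝ (Fin k) =>
      G x * (‖x.2‖ ^ 2 / a ^ 2 + ‖x.1‖ ^ 2 / b ^ 2) ^ (-((k:ℝ) + 1 + 2 * s) / 2))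
    (hqi : IntegrableOn (fun r : ℝ => q r * r ^ (-1 - 2 * s)) (Ioi 0)) :
    1 / 2 * ((1 - s) * ∫ x : ℝ × EuclideanSpace ℝ (Fin k),
      G x * (‖x.2‖ ^ 2 / a ^ 2 + ‖x.1‖ ^ 2 / b ^ 2) ^ (-((k:ℝ) + 1 + 2 * s) / 2)) ≤
      C1 (k + 1) s L C * a ^ (2 * s) +
        C2 (k + 1) s * b ^ (2 * s) * ((1 - s) * ∫ r in Ioi (0:ℝ), q r * r ^ (-1 - 2 * s)) := by
  have : Nonempty (Fin k) := ⟨⟨0, hk⟩⟩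
  have : Nontrivial (EuclideanSpace ℝ (Fin k)) := by
    apply Module.nontrivial_of_finrank_pos (R := ℝ); rw [finrank_euclideanSpace, Fintype.card_fin]; omega
  set p := (k:ℝ) + 1 + 2 * s with hp
  have hk' : (1:ℝ) ≤ k := by exact_mod_cast hk
  -- term 1
  have x1 : ∀ r ∈ Ioi (0:ℝ), r ^ (k - 1) * (mmin L C r * r ^ ((1:ℝ) - p)) =
      mmin L C r * r ^ (-1 - 2 * s) := by
    intro r hr
    have hr' : (0:ℝ) < r := hr
    rw [show -1 - 2 * s = ((k - 1 : ℕ) : ℝ) + (1 - p) by push_cast [hk]; rw [hp]; ring,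
      Real.rpow_add hr', Real.rpow_natCast]
    ring
  obtain ⟨M1, M2⟩ := mmin_int s L C hs hs1 hL hC
  have T1 := prod_term (V := ℝ) (W := EuclideanSpace ℝ (Fin k)) (p := p) (α := a) (β := b)
    (by simp; rw [hp]; linarith) ha hb (mmin L C) (mmin_meas L C) (by
      simp only [finrank_euclideanSpace, Fintype.card_fin, Module.finrank_self, Nat.cast_one]
      exact M1.congr_fun (fun r hr => (x1 r hr).symm) measurableSet_Ioi)
  simp only [finrank_euclideanSpace, Fintype.card_fin, Module.finrank_self, Nat.cast_one] at T1
  rw [setIntegral_congr_fun measurableSet_Ioi x1, M2, surf_ball k hk,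
    japan (V := ℝ) (by simp; rw [hp]; linarith)] at T1
  -- term 2
  have x2 : ∀ r ∈ Ioi (0:ℝ), r ^ (1 - 1) * (q r * r ^ ((k:ℝ) - p)) =
      q r * r ^ (-1 - 2 * s) := by
    intro r hr
    rw [show -1 - 2 * s = (k : ℝ) - p by rw [hp]; ring]
    simp
  have T2 := prod_term (V := EuclideanSpace ℝ (Fin k)) (W := ℝ) (p := p) (α := b) (β := a)
    (by simp; rw [hp]; linarith) hb ha q hq (by
      simp only [finrank_euclideanSpace, Fintype.card_fin, Module.finrank_self]
      exact hqi.congr_fun (fun r hr => (x2 r hr).symm) measurableSet_Ioi)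
  simp only [finrank_euclideanSpace, Fintype.card_fin, Module.finrank_self, Nat.cast_one] at T2
  rw [setIntegral_congr_fun measurableSet_Ioi x2,
    japan (V := EuclideanSpace ℝ (Fin k)) (by simp; rw [hp]; linarith)] at T2
  simp only [finrank_euclideanSpace, Fintype.card_fin, Module.finrank_self, Nat.cast_one,
    Real.norm_eq_abs, hqe, sq_abs] at T1 T2
  simp only [Real.norm_eq_abs, sq_abs] at hGi ⊢
  obtain ⟨T1i, T1v⟩ := T1
  obtain ⟨T2i, T2v⟩ := T2
  -- swap T1
  have sw : MeasurePreserving (Prod.swap : ℝ × EuclideanSpace ℝ (Fin k) → _) volume volume :=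
    Measure.measurePreserving_swap
  have swe : MeasurableEmbedding (Prod.swap : ℝ × EuclideanSpace ℝ (Fin k) → _) :=
    (MeasurableEquiv.prodComm).measurableEmbedding
  rw [← sw.integral_comp swe] at T1v
  rw [← sw.integrable_comp_emb swe] at T1i
  -- reflection
  set K : ℝ × EuclideanSpace ℝ (Fin k) → ℝ := fun x =>
    (‖x.2‖ ^ 2 / a ^ 2 + x.1 ^ 2 / b ^ 2) ^ (-p / 2) with hK
  have hK0 : ∀ x, 0 ≤ K x := fun x => by positivity
  have rf : MeasurePreserving (Prod.map id (fun z => -z) :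
      ℝ × EuclideanSpace ℝ (Fin k) → ℝ × EuclideanSpace ℝ (Fin k)) volume volume :=
    (MeasurePreserving.id _).prod (Measure.measurePreserving_neg _)
  have rfe : MeasurableEmbedding (Prod.map id (fun z => -z) :
      ℝ × EuclideanSpace ℝ (Fin k) → ℝ × EuclideanSpace ℝ (Fin k)) :=
    ((MeasurableEquiv.refl ℝ).prodCongr (MeasurableEquiv.neg _)).measurableEmbedding
  have r1 := rf.integral_comp rfe (fun x => G x * K x)
  have r2 := (rf.integrable_comp_emb rfe (g := fun x => G x * K x)).2 hGi
  have step : ∫ x, G x * K x ≤ ∫ x : ℝ × EuclideanSpace ℝ (Fin k),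
      (mmin L C ‖x.2‖ * K x + q x.1 * K x) := by
    have h2 : ∫ x, (G x * K x + (fun x => G x * K x) (Prod.map id (fun z => -z) x)) ≤
      ∫ x : ℝ × EuclideanSpace ℝ (Fin k), 2 * (mmin L C ‖x.2‖ * K x + q x.1 * K x) := by
      refine integral_mono (hGi.add r2) ((Integrable.add ?_ T2i).const_mul 2) ?_
      · refine T1i.congr (Filter.Eventually.of_forall fun x => ?_)
        simp only [hK, Function.comp, Prod.fst_swap, Prod.snd_swap, add_comm]
      · rintro ⟨t, z⟩
        have h1 := mul_le_mul_of_nonneg_right (hG t z) (hK0 (t, z))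
        have h3 : K (t, -z) = K (t, z) := by simp [hK]
        simp only [Prod.map, id, h3]
        linarith
    have h4 := integral_add (f := fun x => G x * K x)
      (g := fun x => (fun x => G x * K x) (Prod.map id (fun z => -z) x)) hGi r2
    rw [h4, r1, integral_const_mul] at h2
    linarith
  have T1i' : Integrable (fun x : ℝ × EuclideanSpace ℝ (Fin k) => mmin L C ‖x.2‖ * K x) := by
    refine T1i.congr (Filter.Eventually.of_forall fun x => ?_)
    simp only [hK, Function.comp, Prod.fst_swap, Prod.snd_swap, add_comm]
  have T1v' : ∫ x : ℝ × EuclideanSpace ℝ (Fin k), mmin L C ‖x.2‖ * K x =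
      ∫ x : ℝ × EuclideanSpace ℝ (Fin k), mmin L C ‖x.swap.1‖ *
        (x.swap.2 ^ 2 / b ^ 2 + ‖x.swap.1‖ ^ 2 / a ^ 2) ^ (-p / 2) := by
    refine integral_congr_ae (Filter.Eventually.of_forall fun x => ?_)
    simp only [hK, Prod.fst_swap, Prod.snd_swap, add_comm]
  rw [integral_add T1i' T2i, T1v', T1v, T2v] at step
  have hs' : 0 < 1 - s := by linarith
  refine (mul_le_mul_of_nonneg_left (mul_le_mul_of_nonneg_left step hs'.le)
    (by norm_num : (0:ℝ) ≤ 1 / 2)).trans (le_of_eq ?_)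
  have hvol : (volume : Measure ℝ).real (Metric.ball 0 1) = 2 := by
    rw [Real.volume_real_ball] <;> norm_num
  rw [hvol]
  have ap : a ^ (p - 1) = a ^ k * a ^ (2 * s) := by
    rw [show p - 1 = (k:ℝ) + 2 * s by rw [hp]; ring, Real.rpow_add ha, Real.rpow_natCast]
  have bp : b ^ (p - k) = b * b ^ (2 * s) := by
    rw [show p - k = 1 + 2 * s by rw [hp]; ring, Real.rpow_add hb, Real.rpow_one]
  rw [ap, bp, C1, C2, show k + 1 - 1 = k by rfl]
  push_cast
  rw [show (k:ℝ) + 1 - 1 = k by ring, show ((k:ℝ) + 1) / 2 + s = p / 2 by rw [hp]; ring,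
    show (p - 1) / 2 = (k:ℝ) / 2 + s by rw [hp]; ring,
    show (p - k) / 2 = s + 1 / 2 by rw [hp]; ring, Real.sqrt_eq_rpow]
  have g1 : 0 < Real.Gamma (p / 2) := Real.Gamma_pos_of_pos (by rw [hp]; linarith)
  have g2 : 0 < Real.Gamma ((k:ℝ) / 2) := Real.Gamma_pos_of_pos (by linarith)
  have ω : surfOmega k * Real.Gamma ((k:ℝ) / 2) = 2 * Real.pi ^ ((k:ℝ) / 2) := by
    rw [surfOmega]; field_simp
  rw [ω]
  have hb' : a ^ k = b⁻¹ := eq_inv_of_mul_eq_one_left hab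
  rw [hb']
  field_simp

theorem exists_split (k : ℕ) (e : EuclideanSpace ℝ (Fin (k + 1))) (he : ‖e‖ = 1) :
    ∃ (Φ : (ℝ × EuclideanSpace ℝ (Fin k)) ≃ᵐ EuclideanSpace ℝ (Fin (k + 1)))
      (J : EuclideanSpace ℝ (Fin k) → EuclideanSpace ℝ (Fin (k + 1))),
      MeasurePreserving Φ volume volume ∧ (∀ t z, Φ (t, z) = t • e + J z) ∧
      (∀ z, J (-z) = - J z) ∧ (∀ z, ‖J z‖ = ‖z‖) ∧ (∀ z, inner ℝ e (J z) = 0) := by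
  obtain ⟨b, hb⟩ := Orthonormal.exists_orthonormalBasis_extension_of_card_eq (𝕜 := ℝ)
    (E := EuclideanSpace ℝ (Fin (k + 1))) (ι := Fin (k + 1)) (by simp) (v := fun _ => e) (s := {0})
    (by
      refine ⟨fun i => by simpa using he, fun i j hij => ?_⟩
      exact absurd (Subsingleton.elim i j) hij)
  have hb0 : b 0 = e := hb 0 rfl
  have hpi := (volume_preserving_piFinSuccAbove (fun _ : Fin (k + 1) => ℝ) 0).symm
  let Ψ : (ℝ × EuclideanSpace ℝ (Fin k)) ≃ᵐ EuclideanSpace ℝ (Fin (k + 1)) :=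
    ((((MeasurableEquiv.refl ℝ).prodCongr (MeasurableEquiv.toLp 2 (Fin k → ℝ)).symm).trans
      (MeasurableEquiv.piFinSuccAbove (fun _ : Fin (k + 1) => ℝ) 0).symm).trans
      (MeasurableEquiv.toLp 2 (Fin (k + 1) → ℝ))).trans b.measurableEquiv.symm
  have hΨ : MeasurePreserving Ψ volume volume := by
    have h1 : MeasurePreserving ((MeasurableEquiv.refl ℝ).prodCongr
        (MeasurableEquiv.toLp 2 (Fin k → ℝ)).symm) volume volume :=
      (MeasurePreserving.id _).prod (PiLp.volume_preserving_ofLp (Fin k))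
    exact ((h1.trans hpi).trans (PiLp.volume_preserving_toLp (Fin (k + 1)))).trans
      b.measurePreserving_repr_symm
  have hΨv : ∀ t z, Ψ (t, z) = b.repr.symm (WithLp.toLp 2 (Fin.cons t z.ofLp)) := by
    intro t z
    change b.repr.symm (WithLp.toLp 2 (Fin.insertNth 0 t z.ofLp)) = _
    rw [Fin.insertNth_zero]
    rfl
  refine ⟨Ψ, fun z => b.repr.symm (WithLp.toLp 2 (Fin.cons 0 z.ofLp)), hΨ, ?_, ?_, ?_, ?_⟩
  · intro t z
    rw [hΨv]
    have : (WithLp.toLp 2 (Fin.cons t z.ofLp) : EuclideanSpace ℝ (Fin (k + 1))) =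
        t • EuclideanSpace.single 0 1 + WithLp.toLp 2 (Fin.cons 0 z.ofLp) := by
      ext i
      refine Fin.cases ?_ (fun j => ?_) i
      · simp
      · simp
    rw [this, map_add, map_smul, ← hb0, b.repr_symm_single]
  · intro z
    have : (WithLp.toLp 2 (Fin.cons 0 (-z).ofLp) : EuclideanSpace ℝ (Fin (k + 1))) =
        -WithLp.toLp 2 (Fin.cons 0 z.ofLp) := by
      ext i
      refine Fin.cases ?_ (fun j => ?_) i <;> simp
    simp only [this, map_neg]
  · intro z
    rw [LinearIsometryEquiv.norm_map, EuclideanSpace.norm_eq, EuclideanSpace.norm_eq,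
      Fin.sum_univ_succ]
    simp
  · intro z
    rw [← hb0, ← b.repr_apply_apply, LinearIsometryEquiv.apply_symm_apply]
    simp

open Matrix in
theorem matA (k : ℕ) (e : EuclideanSpace ℝ (Fin (k + 1))) (he : ‖e‖ = 1) (a b : ℝ)
    (ha : 0 < a) (hb : 0 < b) :
    ∃ A : Matrix (Fin (k + 1)) (Fin (k + 1)) ℝ, A.PosDef ∧ A.det = a ^ k * b ∧
      ∀ y : EuclideanSpace ℝ (Fin (k + 1)), WithLp.toLp 2 (A⁻¹ *ᵥ y.ofLp) =
        a⁻¹ • y + ((b⁻¹ - a⁻¹) * inner ℝ e y) • e := by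
  have hee : e.ofLp ⬝ᵥ e.ofLp = 1 := by
    have := real_inner_self_eq_norm_sq e
    rw [EuclideanSpace.inner_eq_star_dotProduct, he] at this
    simpa using this
  set P := vecMulVec e.ofLp e.ofLp with hP
  have hPP : P * P = P := by
    rw [hP, vecMulVec_mul_vecMulVec, hee]
    simp
  have hPv : ∀ y : Fin (k+1) → ℝ, P *ᵥ y = (e.ofLp ⬝ᵥ y) • e.ofLp := by
    intro y
    rw [hP, vecMulVec_mulVec]
    ext i; simp [mul_comm]
  have hinv : (a • (1 : Matrix (Fin (k + 1)) (Fin (k + 1)) ℝ) + (b - a) • P)⁻¹ =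
      a⁻¹ • (1 : Matrix (Fin (k + 1)) (Fin (k + 1)) ℝ) + (b⁻¹ - a⁻¹) • P := by
    apply Matrix.inv_eq_right_inv
    rw [add_mul, mul_add, mul_add]
    simp only [smul_mul_smul_comm, mul_one, one_mul, hPP]
    rw [mul_inv_cancel₀ ha.ne', one_smul, add_assoc, ← add_smul, ← add_smul]
    have : a * (b⁻¹ - a⁻¹) + ((b - a) * a⁻¹ + (b - a) * (b⁻¹ - a⁻¹)) = 0 := by
      field_simp; ring
    rw [this, zero_smul, add_zero]
  refine ⟨a • (1 : Matrix _ _ ℝ) + (b - a) • P, ?_, ?_, ?_⟩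
  · refine Matrix.PosDef.of_dotProduct_mulVec_pos ?_ ?_
    · rw [Matrix.IsHermitian, conjTranspose_eq_transpose_of_trivial]
      simp [hP, transpose_vecMulVec]
    · intro y hy
      rw [add_mulVec, smul_mulVec, smul_mulVec, one_mulVec, hPv, dotProduct_add,
        dotProduct_smul, dotProduct_smul, dotProduct_smul]
      simp only [star_trivial, smul_eq_mul]
      rw [dotProduct_comm y e.ofLp]
      have h1 : 0 < y ⬝ᵥ y := by
        have := dotProduct_star_self_pos_iff.2 hy
        simpa using this
      have h2 : (e.ofLp ⬝ᵥ y) ^ 2 ≤ y ⬝ᵥ y := by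
        have := Finset.sum_mul_sq_le_sq_mul_sq Finset.univ e.ofLp y
        have h3 : ∀ w : Fin (k+1) → ℝ, ∑ i, w i ^ 2 = w ⬝ᵥ w := fun w => by
          simp [dotProduct, sq]
        rw [h3, h3, hee, one_mul] at this
        exact this
      rcases eq_or_ne (e.ofLp ⬝ᵥ y) 0 with h0 | h0
      · rw [h0]; simp only [mul_zero, add_zero]; positivity
      · have : 0 < (e.ofLp ⬝ᵥ y) ^ 2 := by positivity
        nlinarith [mul_nonneg ha.le (sub_nonneg.2 h2), mul_pos hb this]
  · have : a • (1 : Matrix (Fin (k + 1)) (Fin (k + 1)) ℝ) + (b - a) • P =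
        a • (1 + replicateCol Unit (((b - a) / a) • e.ofLp) * replicateRow Unit e.ofLp) := by
      rw [← vecMulVec_eq, hP, smul_vecMulVec, smul_add, smul_smul]
      congr 2
      field_simp
    rw [this, det_smul, det_one_add_replicateCol_mul_replicateRow, dotProduct_smul, hee]
    simp only [Fintype.card_fin, smul_eq_mul, mul_one]
    field_simp
    ring
  · intro y
    rw [hinv, add_mulVec, smul_mulVec, smul_mulVec, one_mulVec, hPv]
    have : inner ℝ e y = e.ofLp ⬝ᵥ y.ofLp := by
      rw [EuclideanSpace.inner_eq_star_dotProduct, dotProduct_comm]; simp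
    rw [this, smul_smul]
    rfl

theorem delta2_le_mmin {n : ℕ} (L C : ℝ) (u : EuclideanSpace ℝ (Fin n) → ℝ)
    (hLip : ∀ a b : EuclideanSpace ℝ (Fin n), |u a - u b| ≤ L * ‖a - b‖)
    (hSC : ∀ a b : EuclideanSpace ℝ (Fin n), delta2 u a b ≤ C * ‖b‖ ^ 2)
    (x y : EuclideanSpace ℝ (Fin n)) : delta2 u x y ≤ mmin L C ‖y‖ := by
  refine le_min (hSC x y) ?_
  have h1 := (abs_le.1 (hLip (x + y) x)).2
  have h2 := (abs_le.1 (hLip (x - y) x)).2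
  rw [add_sub_cancel_left] at h1
  rw [sub_sub_cancel_left, norm_neg] at h2
  unfold delta2
  linarith

open Set in
theorem ray_lower (k : ℕ) (hk : 1 ≤ k) (s L C η₀ : ℝ)
    (hs : 1 / 2 < s) (hs1 : s < 1) (hL : 0 < L) (hC : 0 < C) (hη : 0 < η₀)
    (u : EuclideanSpace ℝ (Fin (k + 1)) → ℝ)
    (hLip : ∀ a b : EuclideanSpace ℝ (Fin (k + 1)), |u a - u b| ≤ L * ‖a - b‖)
    (hSC : ∀ a b : EuclideanSpace ℝ (Fin (k + 1)), delta2 u a b ≤ C * ‖b‖ ^ 2)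
    (x : EuclideanSpace ℝ (Fin (k + 1)))
    (hEll : ∀ A : Matrix (Fin (k + 1)) (Fin (k + 1)) ℝ, A.PosDef → A.det = 1 →
      Integrable (fun y => kernelA s A u x y) ∧ η₀ ≤ (1 - s) * LA s A u x)
    (hu : Continuous u)
    (e : EuclideanSpace ℝ (Fin (k + 1))) (he : ‖e‖ = 1)
    (hqi : IntegrableOn (fun r : ℝ => delta2 u x (r • e) * r ^ (-1 - 2 * s)) (Ioi 0)) :
    mu0 (k + 1) s L C η₀ ≤ (1 - s) * ∫ r in Ioi (0:ℝ), delta2 u x (r • e) * r ^ (-1 - 2 * s) := by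
  have hk' : (1:ℝ) ≤ k := by exact_mod_cast hk
  have hmu1 : 0 < mu1 s L C := by
    have : 0 < 2 * s - 1 := by linarith
    unfold mu1; positivity
  have hω : 0 < surfOmega k := by
    have := Real.Gamma_pos_of_pos (show 0 < (k:ℝ) / 2 by linarith)
    unfold surfOmega; positivity
  have g1 := Real.Gamma_pos_of_pos (show 0 < (k:ℝ) / 2 by linarith)
  have g2 := Real.Gamma_pos_of_pos (show 0 < (k:ℝ) / 2 + s by linarith)
  have g3 := Real.Gamma_pos_of_pos (show 0 < ((k:ℝ) + 1) / 2 + s by linarith)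
  have g4 := Real.Gamma_pos_of_pos (show 0 < s + 1 / 2 by linarith)
  have hC1 : 0 < C1 (k + 1) s L C := by
    unfold C1
    rw [show k + 1 - 1 = k by rfl]
    push_cast
    rw [show (k:ℝ) + 1 - 1 = k by ring]
    have := Real.pi_pos
    positivity
  have hC2 : 0 < C2 (k + 1) s := by
    unfold C2
    rw [show k + 1 - 1 = k by rfl]
    push_cast
    rw [show (k:ℝ) + 1 - 1 = k by ring]
    positivity
  set c1 := C1 (k + 1) s L C with hc1
  set c2 := C2 (k + 1) s with hc2
  set w := η₀ / 2 / c1 with hw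
  have hw0 : 0 < w := by positivity
  set a := w ^ (1 / (2 * s)) with ha
  have ha0 : 0 < a := by positivity
  set b := (a ^ k)⁻¹ with hb
  have hb0 : 0 < b := by positivity
  have hab : a ^ k * b = 1 := by rw [hb]; field_simp
  have has : a ^ (2 * s) = w := by
    rw [ha, ← Real.rpow_mul hw0.le]
    rw [show 1 / (2 * s) * (2 * s) = 1 by field_simp, Real.rpow_one]
  have hbs : b ^ (2 * s) = (w ^ k)⁻¹ := by
    rw [hb, Real.inv_rpow (by positivity), ← Real.rpow_natCast a, ← Real.rpow_mul ha0.le,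
      mul_comm, Real.rpow_mul ha0.le, has, Real.rpow_natCast]
  clear_value b a
  obtain ⟨A, hA, hdet, hAv⟩ := matA k e he a b ha0 hb0
  rw [hab] at hdet
  obtain ⟨hi, hge⟩ := hEll A hA hdet
  obtain ⟨Φ, J, hΦ, hΦv, hJneg, hJn, hJe⟩ := exists_split k e he
  have hker : ∀ q : ℝ × EuclideanSpace ℝ (Fin k), kernelA s A u x (Φ q) =
      delta2 u x (q.1 • e + J q.2) *
        (‖q.2‖ ^ 2 / a ^ 2 + ‖q.1‖ ^ 2 / b ^ 2) ^ (-((k:ℝ) + 1 + 2 * s) / 2) := by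
    rintro ⟨t, z⟩
    have h1 : (EuclideanSpace.equiv (Fin (k + 1)) ℝ).symm
        (A⁻¹.mulVec (EuclideanSpace.equiv (Fin (k + 1)) ℝ (Φ (t, z)))) =
        (b⁻¹ * t) • e + a⁻¹ • J z := by
      refine (hAv (Φ (t, z))).trans ?_
      rw [hΦv, inner_add_right, inner_smul_right, hJe, real_inner_self_eq_norm_sq, he]
      rw [smul_add, smul_smul, add_right_comm, ← add_smul]
      congr 2
      ring
    have h2 : ‖(b⁻¹ * t) • e + a⁻¹ • J z‖ ^ 2 = ‖z‖ ^ 2 / a ^ 2 + ‖t‖ ^ 2 / b ^ 2 := by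
      have := norm_add_sq_eq_norm_sq_add_norm_sq_of_inner_eq_zero ((b⁻¹ * t) • e) (a⁻¹ • J z)
        (by rw [inner_smul_left, inner_smul_right, hJe]; simp)
      rw [sq, this, norm_smul, norm_smul, hJn, he, norm_mul, Real.norm_of_nonneg (inv_pos.2 ha0).le,
        Real.norm_of_nonneg (inv_pos.2 hb0).le]
      field_simp
      ring
    unfold kernelA
    rw [h1, ← h2, hΦv, ← Real.rpow_natCast, ← Real.rpow_mul (norm_nonneg _), div_eq_mul_inv,
      ← Real.rpow_neg (norm_nonneg _)]
    congr 2
    push_cast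
    ring
  have hi' := (hΦ.integrable_comp_emb Φ.measurableEmbedding).2 hi
  have hv := hΦ.integral_comp Φ.measurableEmbedding (fun y => kernelA s A u x y)
  simp only [hker] at hv
  have main := prod_ineq k hk s L C a b hs hs1 hL hC ha0 hb0 hab
    (fun q => delta2 u x (q.1 • e + J q.2)) (fun t => delta2 u x (t • e))
    (by unfold delta2; exact (by fun_prop : Continuous _).measurable)
    (by
      intro t
      rcases abs_choice t with h | h
      · rw [h]
      · simp only [h, delta2, neg_smul, sub_neg_eq_add, ← sub_eq_add_neg]; ring)
    (by
      intro t z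
      have d1 := delta2_le_mmin L C u hLip hSC (x + t • e) (J z)
      have d2 := delta2_le_mmin L C u hLip hSC (x - t • e) (J z)
      rw [hJn] at d1 d2
      simp only [hJneg]
      unfold delta2 at d1 d2 ⊢
      rw [show x + (t • e + J z) = x + t • e + J z by abel,
        show x + (t • e + -J z) = x + t • e - J z by abel,
        show x - (t • e + J z) = x - t • e - J z by abel,
        show x - (t • e + -J z) = x - t • e + J z by abel]
      linarith)
    (by
      refine hi'.congr (Filter.Eventually.of_forall fun q => ?_)
      exact hker q)
    hqi
  rw [hv] at main
  set H := (1 - s) * ∫ r in Ioi (0:ℝ), delta2 u x (r • e) * r ^ (-1 - 2 * s) with hH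
  unfold LA at hge
  rw [has, hbs, ← hc1, ← hc2] at main
  have hcw : c1 * w = η₀ / 2 := by rw [hw]; field_simp
  have hfin : η₀ / 2 ≤ c2 * (w ^ k)⁻¹ * H := by linarith
  have hmu : mu0 (k + 1) s L C η₀ = (η₀ / 2) * (w ^ k / c2) := by
    unfold mu0
    rw [← hc1, ← hc2]
    push_cast
    have hwk : w ^ k = (η₀ / 2) ^ k / c1 ^ k := by rw [hw, div_pow]
    rw [show (1:ℝ) - ((k:ℝ) + 1) = -(k:ℝ) by ring, Real.rpow_neg hC1.le, Real.rpow_natCast,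
      Real.rpow_add (by positivity), Real.rpow_natCast, Real.rpow_one, hwk]
    field_simp
  rw [hmu]
  calc η₀ / 2 * (w ^ k / c2) ≤ (c2 * (w ^ k)⁻¹ * H) * (w ^ k / c2) := by gcongr
    _ = H := by field_simp
open Set in
theorem N_int (k : ℕ) (s L C : ℝ) (hs : 1 / 2 < s) (hs1 : s < 1) (hL : 0 < L) (hC : 0 < C) :
    Integrable (fun y : EuclideanSpace ℝ (Fin (k + 1)) =>
      mmin L C ‖y‖ * ‖y‖ ^ (-((k:ℝ) + 1 + 2 * s))) := by
  refine (integrable_fun_norm_addHaar (volume : Measure (EuclideanSpace ℝ (Fin (k + 1))))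
    (f := fun r => mmin L C r * r ^ (-((k:ℝ) + 1 + 2 * s)))).2 ?_
  refine (mmin_int s L C hs hs1 hL hC).1.congr_fun ?_ measurableSet_Ioi
  intro r hr
  have hr : 0 < r := hr
  simp only [finrank_euclideanSpace, Fintype.card_fin, Nat.add_sub_cancel, smul_eq_mul]
  rw [show (-1 - 2 * s) = (k:ℝ) + (-((k:ℝ) + 1 + 2 * s)) by ring, Real.rpow_add hr,
    Real.rpow_natCast]
  ring

open Set in
theorem mmin_scale (s L C c : ℝ) (hs : 1 / 2 < s) (hs1 : s < 1) (hL : 0 < L) (hC : 0 < C)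
    (hc : 0 < c) :
    ∫ r in Ioi (0:ℝ), mmin L C (c * r) * r ^ (-1 - 2 * s) =
      c ^ (2 * s) * (mu1 s L C / (1 - s)) := by
  have h := integral_comp_mul_left_Ioi (fun r => mmin L C r * r ^ (-1 - 2 * s)) 0 hc
  rw [mul_zero, (mmin_int s L C hs hs1 hL hC).2] at h
  have e : ∫ r in Ioi (0:ℝ), mmin L C (c * r) * (c * r) ^ (-1 - 2 * s) =
      c ^ (-1 - 2 * s) * ∫ r in Ioi (0:ℝ), mmin L C (c * r) * r ^ (-1 - 2 * s) := by
    rw [← integral_const_mul]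
    refine setIntegral_congr_fun measurableSet_Ioi ?_
    intro r hr
    have hr : 0 < r := hr
    simp only
    rw [Real.mul_rpow hc.le hr.le]
    ring
  rw [e] at h
  have hx : c ^ (-1 - 2 * s) * (c * c ^ (2 * s)) = 1 := by
    nth_rewrite 2 [← Real.rpow_one c]
    rw [← Real.rpow_add hc, ← Real.rpow_add hc]
    ring_nf
    simp
  have hcne : c ≠ 0 := hc.ne'
  have : c * c ^ (2 * s) * (c ^ (-1 - 2 * s) * ∫ r in Ioi (0:ℝ), mmin L C (c * r) * r ^ (-1 - 2 * s))
     = c * c ^ (2 * s) * (c⁻¹ • (mu1 s L C / (1 - s))) := by rw [h]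
  rw [smul_eq_mul] at this
  calc _ = (c ^ (-1 - 2 * s) * (c * c ^ (2 * s))) *
        ∫ r in Ioi (0:ℝ), mmin L C (c * r) * r ^ (-1 - 2 * s) := by rw [hx, one_mul]
    _ = c * c ^ (2 * s) * (c⁻¹ * (mu1 s L C / (1 - s))) := by rw [← this]; ring
    _ = _ := by field_simp

theorem mmin_nonneg (L C r : ℝ) (hL : 0 < L) (hC : 0 < C) (hr : 0 ≤ r) : 0 ≤ mmin L C r := by
  unfold mmin; positivity

theorem mmin_le_scale (L C c r t : ℝ) (hL : 0 < L) (hC : 0 < C) (hr : 0 ≤ r) (hc : 1 ≤ c)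
    (ht0 : 0 ≤ t) (ht : t ≤ c * r) : mmin L C t ≤ c ^ 2 * mmin L C r := by
  unfold mmin
  rw [mul_min_of_nonneg _ _ (by positivity)]
  refine min_le_min ?_ ?_
  · have : t ^ 2 ≤ (c * r) ^ 2 := by gcongr
    rw [mul_pow] at this
    nlinarith
  · have h1 : c * r ≤ c ^ 2 * r := by nlinarith [mul_nonneg (by linarith : 0 ≤ c) hr]
    have : t ≤ c ^ 2 * r := ht.trans h1
    nlinarith

theorem trace_int {ι E : Type*} [Fintype ι] [DecidableEq ι] [NormedAddCommGroup E]
    [InnerProductSpace ℝ E] [FiniteDimensional ℝ E] [MeasurableSpace E] [BorelSpace E]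
    (b : OrthonormalBasis ι ℝ E) (j : ι) (h : ℝ → ℝ) (hm : Measurable h)
    (hi : Integrable fun z : E => ‖z‖ ^ 2 * h ‖z‖) :
    Integrable (fun z : E => inner ℝ (b j) z ^ 2 * h ‖z‖) ∧
    (Fintype.card ι : ℝ) * ∫ z : E, inner ℝ (b j) z ^ 2 * h ‖z‖ = ∫ z : E, ‖z‖ ^ 2 * h ‖z‖ := by
  have hint : ∀ i, Integrable (fun z : E => inner ℝ (b i) z ^ 2 * h ‖z‖) := by
    intro i
    refine hi.mono ?_ (Filter.Eventually.of_forall fun z => ?_)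
    · have : Measurable (fun z : E => inner ℝ (b i) z ^ 2) :=
        (by fun_prop : Continuous _).measurable
      exact (this.mul (hm.comp measurable_norm)).aestronglyMeasurable
    · rw [norm_mul, norm_mul]
      gcongr
      rw [norm_pow, norm_pow, norm_norm]
      gcongr
      have := norm_inner_le_norm (𝕜 := ℝ) (b i) z
      rwa [b.norm_eq_one, one_mul] at this
  refine ⟨hint j, ?_⟩
  have heq : ∀ i, ∫ z : E, inner ℝ (b i) z ^ 2 * h ‖z‖ = ∫ z : E, inner ℝ (b j) z ^ 2 * h ‖z‖ := by
    intro i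
    set e := b.equiv b (Equiv.swap i j) with he
    have h1 : e (b i) = b j := by rw [he]; simp
    have := (e.measurePreserving).integral_comp e.toHomeomorph.measurableEmbedding
      (fun z : E => inner ℝ (b j) z ^ 2 * h ‖z‖)
    rw [← this]
    refine integral_congr_ae (Filter.Eventually.of_forall fun z => ?_)
    simp only
    rw [← h1]
    simp
  have hs : ∀ z : E, ‖z‖ ^ 2 * h ‖z‖ = ∑ i, inner ℝ (b i) z ^ 2 * h ‖z‖ := by
    intro z
    rw [← Finset.sum_mul, ← b.sum_sq_norm_inner_right z]
    simp
  simp_rw [hs]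
  rw [integral_finsetSum _ (fun i _ => hint i)]
  simp_rw [heq]
  simp

open Matrix in
theorem chg {n : ℕ} (A : Matrix (Fin n) (Fin n) ℝ) (hdet : A.det = 1) :
    MeasurePreserving (fun z : EuclideanSpace ℝ (Fin n) =>
      (WithLp.toLp 2 (A *ᵥ z.ofLp) : EuclideanSpace ℝ (Fin n))) ∧
    MeasurableEmbedding (fun z : EuclideanSpace ℝ (Fin n) =>
      (WithLp.toLp 2 (A *ᵥ z.ofLp) : EuclideanSpace ℝ (Fin n))) := by
  have hd : LinearMap.det (Matrix.toEuclideanLin A) = 1 := by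
    rw [← hdet]; exact LinearMap.det_toLpLin _ _
  have e : (fun z : EuclideanSpace ℝ (Fin n) =>
      (WithLp.toLp 2 (A *ᵥ z.ofLp) : EuclideanSpace ℝ (Fin n))) = Matrix.toEuclideanLin A := by
    funext z; rfl
  rw [e]
  constructor
  · refine ⟨(LinearMap.continuous_of_finiteDimensional _).measurable, ?_⟩
    rw [Measure.map_linearMap_addHaar_eq_smul_addHaar _ (by rw [hd]; norm_num), hd]
    simp
  · refine (LinearMap.isClosedEmbedding_of_injective ?_).measurableEmbedding
    refine LinearMap.ker_eq_bot.2 ?_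
    rw [← e]
    intro a b hab
    have h1 : A *ᵥ a.ofLp = A *ᵥ b.ofLp := congrArg WithLp.ofLp hab
    have h2 := congrArg (fun v => A⁻¹ *ᵥ v) h1
    simp only [Matrix.mulVec_mulVec] at h2
    rw [Matrix.nonsing_inv_mul _ (by rw [hdet]; exact isUnit_one), Matrix.one_mulVec,
      Matrix.one_mulVec] at h2
    exact WithLp.ofLp_injective 2 h2

open Set Matrix in
theorem mK_bound (k : ℕ) (s L C : ℝ) (hs : 1 / 2 < s) (hs1 : s < 1) (hL : 0 < L) (hC : 0 < C)
    (A : Matrix (Fin (k + 1)) (Fin (k + 1)) ℝ) (hA : A.PosDef) (hdet : A.det = 1) (j : Fin (k + 1)) :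
    Integrable (fun y : EuclideanSpace ℝ (Fin (k + 1)) =>
      mmin L C ‖y‖ * ‖(WithLp.toLp 2 (A⁻¹ *ᵥ y.ofLp) : EuclideanSpace ℝ (Fin (k + 1)))‖ ^
        (-((k:ℝ) + 1 + 2 * s))) ∧
    (hA.1.eigenvalues j) ^ (2 * s) * (∫ y : EuclideanSpace ℝ (Fin (k + 1)),
      mmin L C ‖y‖ * ‖y‖ ^ (-((k:ℝ) + 1 + 2 * s))) ≤ ((k:ℝ) + 1) *
    ∫ y : EuclideanSpace ℝ (Fin (k + 1)),
      mmin L C ‖y‖ * ‖(WithLp.toLp 2 (A⁻¹ *ᵥ y.ofLp) : EuclideanSpace ℝ (Fin (k + 1)))‖ ^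
        (-((k:ℝ) + 1 + 2 * s)) := by
  set p := (k:ℝ) + 1 + 2 * s with hp
  have hN := N_int k s L C hs hs1 hL hC
  rw [← hp] at hN
  set T : EuclideanSpace ℝ (Fin (k + 1)) → EuclideanSpace ℝ (Fin (k + 1)) :=
    fun z => WithLp.toLp 2 (A *ᵥ z.ofLp) with hT
  obtain ⟨hmp, hme⟩ := chg A hdet
  rw [← hT] at hmp hme
  have hinv : ∀ z, (WithLp.toLp 2 (A⁻¹ *ᵥ (T z).ofLp) : EuclideanSpace ℝ (Fin (k + 1))) = z := by
    intro z
    simp only [hT, Matrix.mulVec_mulVec]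
    rw [Matrix.nonsing_inv_mul _ (by rw [hdet]; exact isUnit_one)]
    simp
  set g : EuclideanSpace ℝ (Fin (k + 1)) → ℝ := fun y =>
      mmin L C ‖y‖ * ‖(WithLp.toLp 2 (A⁻¹ *ᵥ y.ofLp) : EuclideanSpace ℝ (Fin (k + 1)))‖ ^ (-p) with hg
  have hgT : ∀ z, g (T z) = mmin L C ‖T z‖ * ‖z‖ ^ (-p) := by
    intro z; simp only [hg]; rw [hinv]
  have hTlin : ∀ z, T z = LinearMap.toContinuousLinearMap (Matrix.toEuclideanLin A) z := by
    intro z; rfl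
  have hTc : Continuous T := by
    rw [show T = _ from funext hTlin]; exact ContinuousLinearMap.continuous _
  have hTsm : ∀ (r : ℝ) z, T (r • z) = r • T z := by
    intro r z; rw [hTlin, hTlin, map_smul]
  have hgTi : Integrable (g ∘ T) := by
    set K := ‖LinearMap.toContinuousLinearMap (Matrix.toEuclideanLin A)‖ with hK
    refine (hN.const_mul ((1 + K) ^ 2)).mono' ?_ (Filter.Eventually.of_forall fun z => ?_)
    · have : Measurable (g ∘ T) := by
        rw [show g ∘ T = _ from funext hgT]
        refine ((mmin_meas L C).comp hTc.measurable.norm).mul ?_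
        exact measurable_norm.pow_const _
      exact this.aestronglyMeasurable
    · simp only [Function.comp]
      rw [hgT, norm_mul, Real.norm_of_nonneg (mmin_nonneg _ _ _ hL hC (norm_nonneg _)),
        Real.norm_of_nonneg (by positivity), ← mul_assoc]
      have hK0 : 0 ≤ K := norm_nonneg _
      have : ‖T z‖ ≤ K * ‖z‖ := by rw [hTlin]; exact ContinuousLinearMap.le_opNorm _ _
      gcongr
      refine mmin_le_scale _ _ _ _ _ hL hC (norm_nonneg _) (by linarith) (norm_nonneg _) ?_
      nlinarith [norm_nonneg z]
  have hgi : Integrable g := (hmp.integrable_comp_emb hme).1 hgTi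
  refine ⟨hgi, ?_⟩
  rw [← hmp.integral_comp hme g]
  set l := hA.1.eigenvalues j with hl
  have hl0 : 0 < l := hA.eigenvalues_pos j
  set v := hA.1.eigenvectorBasis j with hv
  have hv1 : ‖v‖ = 1 := (hA.1.eigenvectorBasis).norm_eq_one j
  have hin : ∀ z, inner ℝ v (T z) = l * inner ℝ v z := by
    intro z
    have h1 : A *ᵥ v.ofLp = l • v.ofLp := hA.1.mulVec_eigenvectorBasis j
    have hAt : Aᵀ = A := by simpa using hA.1.eq
    simp only [EuclideanSpace.inner_eq_star_dotProduct, hT, star_trivial]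
    rw [dotProduct_comm, Matrix.dotProduct_mulVec, ← Matrix.mulVec_transpose, hAt, h1,
      smul_dotProduct, dotProduct_comm, smul_eq_mul]
  have hm : Measurable (fun r : ℝ => mmin L C r * r ^ (-p - 2)) :=
    (mmin_meas L C).mul (measurable_id.pow_const _)
  have hmm0 : mmin L C 0 = 0 := by simp [mmin]
  have hNe : ∀ z : EuclideanSpace ℝ (Fin (k + 1)),
      ‖z‖ ^ 2 * (mmin L C ‖z‖ * ‖z‖ ^ (-p - 2)) = mmin L C ‖z‖ * ‖z‖ ^ (-p) := by
    intro z
    rcases (norm_nonneg z).eq_or_lt with h | h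
    · rw [← h, hmm0]; simp
    · rw [show -p = 2 + (-p - 2) by ring, Real.rpow_add h, Real.rpow_ofNat]
      ring_nf
  obtain ⟨t1, t2⟩ := trace_int hA.1.eigenvectorBasis j _ hm (by simp only [hNe]; exact hN)
  simp only [hNe, ← hv] at t1 t2
  rw [← t2]
  simp only [Fintype.card_fin]
  push_cast
  rw [mul_left_comm, ← integral_const_mul]
  refine mul_le_mul_of_nonneg_left ?_ (by positivity)
  refine polar_le volume _ _ (t1.const_mul _) hgTi ?_
  intro w hw _ _
  simp only [finrank_euclideanSpace, Fintype.card_fin, Nat.add_sub_cancel]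
  have hTw : l * |inner ℝ v w| ≤ ‖T w‖ := by
    have := norm_inner_le_norm (𝕜 := ℝ) v (T w)
    rw [hv1, hin, one_mul, norm_mul, Real.norm_of_nonneg hl0.le] at this
    exact this
  have hTw0 : 0 < ‖T w‖ := by
    rw [norm_pos_iff]
    intro h0
    have := hinv w
    rw [h0] at this
    simp at this
    rw [← this] at hw
    simp at hw
  have hiw : |inner ℝ v w| ≤ 1 := by
    have := norm_inner_le_norm (𝕜 := ℝ) v w
    rwa [hv1, hw, one_mul] at this
  have hL1 : ∫ r in Ioi (0:ℝ), r ^ k * (l ^ (2 * s) * (inner ℝ v (r • w) ^ 2 *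
      (mmin L C ‖r • w‖ * ‖r • w‖ ^ (-p - 2)))) =
      l ^ (2 * s) * inner ℝ v w ^ 2 * (mu1 s L C / (1 - s)) := by
    rw [← (mmin_int s L C hs hs1 hL hC).2, ← integral_const_mul]
    refine setIntegral_congr_fun measurableSet_Ioi ?_
    intro r hr
    have hr : 0 < r := hr
    simp only
    rw [norm_smul, hw, mul_one, Real.norm_of_nonneg hr.le, inner_smul_right,
      show (-1 - 2 * s) = (k:ℝ) + 2 + (-p - 2) by rw [hp]; ring, Real.rpow_add hr,
      Real.rpow_add hr, Real.rpow_natCast, Real.rpow_ofNat]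
    ring
  have hR1 : ∫ r in Ioi (0:ℝ), r ^ k * ((g ∘ T) (r • w)) =
      ‖T w‖ ^ (2 * s) * (mu1 s L C / (1 - s)) := by
    rw [← mmin_scale s L C _ hs hs1 hL hC hTw0]
    refine setIntegral_congr_fun measurableSet_Ioi ?_
    intro r hr
    have hr : 0 < r := hr
    simp only [Function.comp]
    rw [hgT, hTsm, norm_smul, norm_smul, hw, mul_one, Real.norm_of_nonneg hr.le,
      show (-1 - 2 * s) = (k:ℝ) + (-p) by rw [hp]; ring, Real.rpow_add hr,
      Real.rpow_natCast, mul_comm r]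
    ring
  have hmu1 : 0 < mu1 s L C := by
    have : 0 < 2 * s - 1 := by linarith
    unfold mu1; positivity
  have h1s : 0 < 1 - s := by linarith
  refine (hL1.trans_le ?_).trans_eq hR1.symm
  refine mul_le_mul_of_nonneg_right ?_ (by positivity)
  calc l ^ (2 * s) * inner ℝ v w ^ 2 ≤ l ^ (2 * s) * |inner ℝ v w| ^ (2 * s) := by
        gcongr
        rw [← sq_abs, ← Real.rpow_ofNat]
        rcases (abs_nonneg (inner ℝ v w)).eq_or_lt with h | h
        · rw [← h, Real.zero_rpow (by norm_num), Real.zero_rpow (by linarith)]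
        · exact Real.rpow_le_rpow_of_exponent_ge h hiw (by linarith)
    _ = (l * |inner ℝ v w|) ^ (2 * s) := by rw [Real.mul_rpow hl0.le (abs_nonneg _)]
    _ ≤ _ := by gcongr

theorem mu1_pos (s L C : ℝ) (hs : 1 / 2 < s) (hL : 0 < L) (hC : 0 < C) : 0 < mu1 s L C := by
  have : 0 < 2 * s - 1 := by linarith
  unfold mu1; positivity

theorem mu0_pos (k : ℕ) (hk : 1 ≤ k) (s L C η₀ : ℝ) (hs : 1 / 2 < s) (hL : 0 < L) (hC : 0 < C)
    (hη : 0 < η₀) : 0 < mu0 (k + 1) s L C η₀ := by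
  have hk' : (1:ℝ) ≤ k := by exact_mod_cast hk
  have hmu1 : 0 < mu1 s L C := mu1_pos s L C hs hL hC
  have hω : 0 < surfOmega k := by
    have := Real.Gamma_pos_of_pos (show 0 < (k:ℝ) / 2 by linarith)
    unfold surfOmega; positivity
  have g1 := Real.Gamma_pos_of_pos (show 0 < (k:ℝ) / 2 by linarith)
  have g2 := Real.Gamma_pos_of_pos (show 0 < (k:ℝ) / 2 + s by linarith)
  have g3 := Real.Gamma_pos_of_pos (show 0 < ((k:ℝ) + 1) / 2 + s by linarith)
  have g4 := Real.Gamma_pos_of_pos (show 0 < s + 1 / 2 by linarith)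
  have hC1 : 0 < C1 (k + 1) s L C := by
    unfold C1
    rw [show k + 1 - 1 = k by rfl]
    push_cast
    rw [show (k:ℝ) + 1 - 1 = k by ring]
    have := Real.pi_pos
    positivity
  have hC2 : 0 < C2 (k + 1) s := by
    unfold C2
    rw [show k + 1 - 1 = k by rfl]
    push_cast
    rw [show (k:ℝ) + 1 - 1 = k by ring]
    positivity
  unfold mu0
  positivity

open Set Matrix in
theorem ker_lower (k : ℕ) (hk : 1 ≤ k) (s L C η₀ : ℝ)
    (hs : 1 / 2 < s) (hs1 : s < 1) (hL : 0 < L) (hC : 0 < C) (hη : 0 < η₀)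
    (u : EuclideanSpace ℝ (Fin (k + 1)) → ℝ)
    (hLip : ∀ a b : EuclideanSpace ℝ (Fin (k + 1)), |u a - u b| ≤ L * ‖a - b‖)
    (hSC : ∀ a b : EuclideanSpace ℝ (Fin (k + 1)), delta2 u a b ≤ C * ‖b‖ ^ 2)
    (x : EuclideanSpace ℝ (Fin (k + 1)))
    (hEll : ∀ A : Matrix (Fin (k + 1)) (Fin (k + 1)) ℝ, A.PosDef → A.det = 1 →
      Integrable (fun y => kernelA s A u x y) ∧ η₀ ≤ (1 - s) * LA s A u x)
    (hu : Continuous u)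
    (A : Matrix (Fin (k + 1)) (Fin (k + 1)) ℝ) (hA : A.PosDef) (hdet : A.det = 1) :
    mu0 (k + 1) s L C η₀ / mu1 s L C * (∫ y : EuclideanSpace ℝ (Fin (k + 1)),
      mmin L C ‖y‖ * ‖(WithLp.toLp 2 (A⁻¹ *ᵥ y.ofLp) : EuclideanSpace ℝ (Fin (k + 1)))‖ ^
        (-((k:ℝ) + 1 + 2 * s))) ≤ ∫ y, kernelA s A u x y := by
  have hmu1 := mu1_pos s L C hs hL hC
  have h1s : 0 < 1 - s := by linarith
  have hmi := (mK_bound k s L C hs hs1 hL hC A hA hdet 0).1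
  rw [← integral_const_mul]
  refine polar_le volume _ _ (hmi.const_mul _) (hEll A hA hdet).1 ?_
  intro w hw _ hgi
  simp only [finrank_euclideanSpace, Fintype.card_fin, Nat.add_sub_cancel] at hgi ⊢
  set p := (k:ℝ) + 1 + 2 * s with hp
  set S : EuclideanSpace ℝ (Fin (k + 1)) → EuclideanSpace ℝ (Fin (k + 1)) :=
    fun z => WithLp.toLp 2 (A⁻¹ *ᵥ z.ofLp) with hS
  have hSsm : ∀ (r : ℝ) z, S (r • z) = r • S z := by
    intro r z
    simp [hS, Matrix.mulVec_smul]
  have hSw : 0 < ‖S w‖ := by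
    rw [norm_pos_iff]
    intro h0
    have h1 : A⁻¹ *ᵥ w.ofLp = 0 := by simpa [hS] using h0
    have h2 : A *ᵥ (A⁻¹ *ᵥ w.ofLp) = w.ofLp := by
      rw [Matrix.mulVec_mulVec, Matrix.mul_nonsing_inv _ (by rw [hdet]; exact isUnit_one),
        Matrix.one_mulVec]
    rw [h1, Matrix.mulVec_zero] at h2
    have : w = 0 := by
      ext i; rw [← h2]; rfl
    rw [this] at hw
    simp at hw
  have hkey : ∀ r : ℝ, 0 < r → r ^ k * ‖S (r • w)‖ ^ (-p) = ‖S w‖ ^ (-p) * r ^ (-1 - 2 * s) := by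
    intro r hr
    rw [hSsm, norm_smul, Real.norm_of_nonneg hr.le, Real.mul_rpow hr.le (norm_nonneg _),
      show (-1 - 2 * s) = (k:ℝ) + (-p) by rw [hp]; ring, Real.rpow_add hr, Real.rpow_natCast]
    ring
  have hker : ∀ y, kernelA s A u x y = delta2 u x y * ‖S y‖ ^ (-p) := by
    intro y
    unfold kernelA
    rw [Real.rpow_neg (norm_nonneg _), div_eq_mul_inv, hp]
    push_cast
    rfl
  have hcpos : 0 < ‖S w‖ ^ (-p) := by positivity
  have hE : EqOn (fun r : ℝ => r ^ k * kernelA s A u x (r • w))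
      (fun r => ‖S w‖ ^ (-p) * (delta2 u x (r • w) * r ^ (-1 - 2 * s))) (Ioi 0) := by
    intro r hr
    simp only
    rw [hker, mul_left_comm, hkey r hr]
    ring
  have hqi : IntegrableOn (fun r : ℝ => delta2 u x (r • w) * r ^ (-1 - 2 * s)) (Ioi 0) := by
    have h1 := (hgi.congr_fun hE measurableSet_Ioi).const_mul (‖S w‖ ^ (-p))⁻¹
    refine IntegrableOn.congr_fun h1 ?_ measurableSet_Ioi
    intro r _
    simp only
    rw [← mul_assoc, inv_mul_cancel₀ hcpos.ne', one_mul]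
  have hray := ray_lower k hk s L C η₀ hs hs1 hL hC hη u hLip hSC x hEll hu w hw hqi
  have hl : ∫ r in Ioi (0:ℝ), r ^ k * (mu0 (k + 1) s L C η₀ / mu1 s L C *
      (mmin L C ‖r • w‖ * ‖S (r • w)‖ ^ (-p))) =
      mu0 (k + 1) s L C η₀ / mu1 s L C * ‖S w‖ ^ (-p) * (mu1 s L C / (1 - s)) := by
    rw [← (mmin_int s L C hs hs1 hL hC).2, ← integral_const_mul]
    refine setIntegral_congr_fun measurableSet_Ioi ?_
    intro r hr
    have hr' : 0 < r := hr
    have := hkey r hr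
    simp only
    rw [norm_smul, hw, mul_one, Real.norm_of_nonneg hr'.le]
    linear_combination (mu0 (k + 1) s L C η₀ / mu1 s L C * mmin L C r) * this
  refine hl.trans_le ?_
  rw [setIntegral_congr_fun measurableSet_Ioi hE, integral_const_mul]
  have : mu0 (k + 1) s L C η₀ / (1 - s) ≤ ∫ r in Ioi (0:ℝ), delta2 u x (r • w) * r ^ (-1 - 2 * s) := by
    rw [div_le_iff₀ h1s]; linarith
  calc _ = ‖S w‖ ^ (-p) * (mu0 (k + 1) s L C η₀ / (1 - s)) := by field_simp
    _ ≤ _ := by gcongr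

open Matrix in
theorem exists_big_eig (k : ℕ) (hk : 1 ≤ k) (A : Matrix (Fin (k + 1)) (Fin (k + 1)) ℝ)
    (hA : A.PosDef) (hdet : A.det = 1) (θ : ℝ) (hθ0 : 0 < θ)
    (hn : ¬ (A - θ • (1 : Matrix (Fin (k + 1)) (Fin (k + 1)) ℝ)).PosSemidef) :
    ∃ j, 1 ≤ θ * hA.1.eigenvalues j ^ k := by
  have h1 : ∃ i, hA.1.eigenvalues i < θ := by
    by_contra! hcon
    apply hn
    have hU := hA.1.spectral_theorem
    have hA' : A - θ • (1 : Matrix (Fin (k + 1)) (Fin (k + 1)) ℝ) =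
        (hA.1.eigenvectorUnitary : Matrix (Fin (k + 1)) (Fin (k + 1)) ℝ) *
          diagonal (fun i => hA.1.eigenvalues i - θ) *
          (hA.1.eigenvectorUnitary : Matrix (Fin (k + 1)) (Fin (k + 1)) ℝ)ᴴ := by
      have h2 : (diagonal (fun i => hA.1.eigenvalues i - θ) :
          Matrix (Fin (k + 1)) (Fin (k + 1)) ℝ) =
          diagonal (hA.1.eigenvalues) - θ • 1 := by
        rw [← diagonal_one, ← diagonal_smul, diagonal_sub]
        congr 1
        funext i
        simp
      have h3 : (hA.1.eigenvectorUnitary : Matrix (Fin (k + 1)) (Fin (k + 1)) ℝ) *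
          (hA.1.eigenvectorUnitary : Matrix (Fin (k + 1)) (Fin (k + 1)) ℝ)ᴴ = 1 := by
        exact Unitary.mul_star_self_of_mem hA.1.eigenvectorUnitary.2
      rw [h2, mul_sub, sub_mul, mul_smul_comm, mul_one, smul_mul_assoc, h3]
      congr 1
    rw [hA']
    refine PosSemidef.mul_mul_conjTranspose_same ?_ _
    rw [posSemidef_diagonal_iff]
    intro i
    linarith [hcon i]
  obtain ⟨i, hi⟩ := h1
  obtain ⟨j, -, hj⟩ := Finset.exists_max_image Finset.univ hA.1.eigenvalues ⟨i, Finset.mem_univ i⟩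
  refine ⟨j, ?_⟩
  have hd := hA.1.det_eq_prod_eigenvalues
  rw [hdet, ← Finset.mul_prod_erase _ _ (Finset.mem_univ i)] at hd
  have hpr : ∏ m ∈ Finset.univ.erase i, hA.1.eigenvalues m ≤ hA.1.eigenvalues j ^ k := by
    calc _ ≤ ∏ m ∈ Finset.univ.erase i, hA.1.eigenvalues j :=
          Finset.prod_le_prod (fun m _ => (hA.eigenvalues_pos m).le)
            (fun m _ => hj m (Finset.mem_univ m))
      _ = _ := by rw [Finset.prod_const, Finset.card_erase_of_mem (Finset.mem_univ i)]; simp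
  have hp0 : 0 < ∏ m ∈ Finset.univ.erase i, hA.1.eigenvalues m :=
    Finset.prod_pos fun m _ => hA.eigenvalues_pos m
  simp only [RCLike.ofReal_real_eq_id, id] at hd
  calc (1:ℝ) = _ := hd
    _ ≤ θ * _ := mul_le_mul_of_nonneg_right hi.le hp0.le
    _ ≤ _ := by gcongr

theorem stmt0 (n : ℕ) (hn : 2 ≤ n) (s L C η₀ : ℝ)
    (hs : 1 / 2 < s) (hs1 : s < 1) (hL : 0 < L) (hC : 0 < C) (hη : 0 < η₀)
    (u : EuclideanSpace ℝ (Fin n) → ℝ)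
    (hLip : ∀ a b : EuclideanSpace ℝ (Fin n), |u a - u b| ≤ L * ‖a - b‖)
    (hSC : ∀ a b : EuclideanSpace ℝ (Fin n), delta2 u a b ≤ C * ‖b‖ ^ 2)
    (x : EuclideanSpace ℝ (Fin n))
    (hEll : ∀ A : Matrix (Fin n) (Fin n) ℝ, A.PosDef → A.det = 1 →
      Integrable (fun y => kernelA s A u x y) ∧ η₀ ≤ (1 - s) * LA s A u x)
    (θ : ℝ) (hθ0 : 0 < θ)
    (hθ : θ < (mu0 n s L C η₀ / (n * mu1 s L C)) ^ (((n : ℝ) - 1) / (2 * s))) :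
    sInf {z : ℝ | ∃ A : Matrix (Fin n) (Fin n) ℝ, A.PosDef ∧ A.det = 1 ∧ z = LA s A u x} =
      sInf {z : ℝ | ∃ A : Matrix (Fin n) (Fin n) ℝ, A.PosDef ∧ A.det = 1 ∧
        (A - θ • (1 : Matrix (Fin n) (Fin n) ℝ)).PosSemidef ∧ z = LA s A u x} := by
  obtain ⟨k, rfl⟩ : ∃ k, n = k + 1 := ⟨n - 1, by omega⟩
  have hk : 1 ≤ k := by omega
  have hk' : (1:ℝ) ≤ k := by exact_mod_cast hk
  have hu : Continuous u := by
    refine (LipschitzWith.of_dist_le_mul (K := ⟨L, hL.le⟩) fun a b => ?_).continuous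
    rw [Real.dist_eq, dist_eq_norm]
    exact hLip a b
  have hmu1 := mu1_pos s L C hs hL hC
  have hmu0 := mu0_pos k hk s L C η₀ hs hL hC hη
  have h1s : 0 < 1 - s := by linarith
  have hkl := ker_lower k hk s L C η₀ hs hs1 hL hC hη u hLip hSC x hEll hu
  set m0 := mu0 (k + 1) s L C η₀ with hm0
  set m1 := mu1 s L C with hm1
  have hN := N_int k s L C hs hs1 hL hC
  set NI := ∫ y : EuclideanSpace ℝ (Fin (k + 1)), mmin L C ‖y‖ * ‖y‖ ^ (-((k:ℝ) + 1 + 2 * s)) with hNI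
  have hI1 : (1 : Matrix (Fin (k + 1)) (Fin (k + 1)) ℝ).PosDef := Matrix.PosDef.one
  have hId : (1 : Matrix (Fin (k + 1)) (Fin (k + 1)) ℝ).det = 1 := Matrix.det_one
  obtain ⟨hIi, hIη⟩ := hEll 1 hI1 hId
  have hIle : ∫ y, kernelA s 1 u x y ≤ NI := by
    refine integral_mono hIi hN fun y => ?_
    simp only [kernelA]
    rw [inv_one, Matrix.one_mulVec, ContinuousLinearEquiv.symm_apply_apply, div_eq_mul_inv,
      ← Real.rpow_neg (norm_nonneg _)]
    push_cast
    gcongr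
    exact delta2_le_mmin L C u hLip hSC x y
  have hNpos : 0 < NI := by
    unfold LA at hIη
    have : 0 < (1 - s) * (1 / 2 * ∫ y, kernelA s 1 u x y) := hη.trans_le hIη
    have h2 := (pos_iff_pos_of_mul_pos this).1 h1s
    linarith
  have hm01 : m0 ≤ m1 := by
    have h1 := hkl 1 hI1 hId
    simp only [inv_one, Matrix.one_mulVec, WithLp.toLp_ofLp] at h1
    rw [← hNI] at h1
    have h2 : m0 / m1 * NI ≤ 1 * NI := by linarith
    have h3 := le_of_mul_le_mul_right h2 hNpos
    rwa [div_le_one hmu1] at h3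
  set ρ := m0 / ((((k + 1 : ℕ)) : ℝ) * m1) with hρ
  have hρ0 : 0 < ρ := by positivity
  have hρ1 : ρ ≤ 1 := by
    rw [hρ, div_le_one (by positivity)]
    push_cast
    nlinarith
  have hex : 0 < ((k + 1 : ℕ) : ℝ) - 1 := by push_cast; linarith
  have hθ1 : θ ≤ 1 := hθ.le.trans (Real.rpow_le_one hρ0.le hρ1 (by positivity))
  have hIθ : ((1 : Matrix (Fin (k + 1)) (Fin (k + 1)) ℝ) - θ • 1).PosSemidef := by
    have : (1 : Matrix (Fin (k + 1)) (Fin (k + 1)) ℝ) - θ • 1 = (1 - θ) • 1 := by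
      rw [sub_smul, one_smul]
    rw [this]
    exact Matrix.PosSemidef.one.smul (by linarith)
  have hbd : ∀ A : Matrix (Fin (k + 1)) (Fin (k + 1)) ℝ, A.PosDef → A.det = 1 →
      η₀ / (1 - s) ≤ LA s A u x := by
    intro A hA hdet
    rw [div_le_iff₀ h1s]
    linarith [(hEll A hA hdet).2]
  have hbig : ∀ A : Matrix (Fin (k + 1)) (Fin (k + 1)) ℝ, A.PosDef → A.det = 1 →
      ¬ (A - θ • (1 : Matrix (Fin (k + 1)) (Fin (k + 1)) ℝ)).PosSemidef →
      LA s 1 u x ≤ LA s A u x := by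
    intro A hA hdet hnot
    obtain ⟨j, hj⟩ := exists_big_eig k hk A hA hdet θ hθ0 hnot
    have hb := (mK_bound k s L C hs hs1 hL hC A hA hdet j).2
    have hl0 := hA.eigenvalues_pos j
    have h1 := hkl A hA hdet
    set l := hA.1.eigenvalues j with hl
    rw [← hNI] at hb
    set Q := ∫ y : EuclideanSpace ℝ (Fin (k + 1)),
      mmin L C ‖y‖ * ‖(WithLp.toLp 2 (Matrix.mulVec A⁻¹ y.ofLp) : EuclideanSpace ℝ (Fin (k + 1)))‖ ^
        (-((k:ℝ) + 1 + 2 * s)) with hQ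
    have hρl : 1 ≤ ρ * l ^ (2 * s) := by
      push_cast at hθ
      rw [show (k:ℝ) + 1 - 1 = k by ring] at hθ
      have h2 : 1 ≤ ρ ^ ((k:ℝ) / (2 * s)) * l ^ k := by
        refine hj.trans ?_
        gcongr
      have h3 : (1:ℝ) ≤ (ρ ^ ((k:ℝ) / (2 * s)) * l ^ k) ^ (2 * s / k) :=
        Real.one_le_rpow h2 (by positivity)
      rw [Real.mul_rpow (by positivity) (by positivity), ← Real.rpow_mul hρ0.le,
        ← Real.rpow_natCast, ← Real.rpow_mul hl0.le,
        show (k:ℝ) / (2 * s) * (2 * s / k) = 1 by field_simp,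
        show (k:ℝ) * (2 * s / k) = 2 * s by field_simp, Real.rpow_one] at h3
      exact h3
    have hfin : NI ≤ m0 / m1 * Q := by
      calc NI ≤ (ρ * l ^ (2 * s)) * NI := le_mul_of_one_le_left hNpos.le hρl
        _ = ρ * (l ^ (2 * s) * NI) := by ring
        _ ≤ ρ * (((k:ℝ) + 1) * Q) := by gcongr
        _ = m0 / m1 * Q := by rw [hρ]; push_cast; field_simp
    unfold LA
    linarith
  have hne2 : {z : ℝ | ∃ A : Matrix (Fin (k + 1)) (Fin (k + 1)) ℝ, A.PosDef ∧ A.det = 1 ∧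
        (A - θ • (1 : Matrix (Fin (k + 1)) (Fin (k + 1)) ℝ)).PosSemidef ∧ z = LA s A u x}.Nonempty :=
    ⟨_, 1, hI1, hId, hIθ, rfl⟩
  have hB1 : BddBelow {z : ℝ | ∃ A : Matrix (Fin (k + 1)) (Fin (k + 1)) ℝ, A.PosDef ∧ A.det = 1 ∧
      z = LA s A u x} := by
    refine ⟨η₀ / (1 - s), ?_⟩
    rintro z ⟨A, hA, hd, rfl⟩
    exact hbd A hA hd
  have hB2 : BddBelow {z : ℝ | ∃ A : Matrix (Fin (k + 1)) (Fin (k + 1)) ℝ, A.PosDef ∧ A.det = 1 ∧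
        (A - θ • (1 : Matrix (Fin (k + 1)) (Fin (k + 1)) ℝ)).PosSemidef ∧ z = LA s A u x} := by
    refine ⟨η₀ / (1 - s), ?_⟩
    rintro z ⟨A, hA, hd, -, rfl⟩
    exact hbd A hA hd
  apply le_antisymm
  · refine csInf_le_csInf hB1 hne2 ?_
    rintro z ⟨A, hA, hd, -, rfl⟩
    exact ⟨A, hA, hd, rfl⟩
  · refine le_csInf ⟨_, 1, hI1, hId, rfl⟩ ?_
    rintro z ⟨A, hA, hd, rfl⟩
    by_cases hp : (A - θ • (1 : Matrix (Fin (k + 1)) (Fin (k + 1)) ℝ)).PosSemidef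
    · exact csInf_le hB2 ⟨A, hA, hd, hp, rfl⟩
    · exact (csInf_le hB2 ⟨1, hI1, hId, hIθ, rfl⟩).trans (hbig A hA hd hp)
end

section
/- Let n ≥ 2, 1/2 < s < 1, and let L, C, η₀ > 0. Let u : ℝⁿ → ℝ be Lipschitz with constant L and semiconcave with constant C, and suppose u satisfies the ellipticity bound η₀ at a point x ∈ ℝⁿ. Then for every unit vector e ∈ ℝⁿ, the function t ↦ δ(u,x,te)/|t|^{1+2s} is Lebesgue integrable on ℝ and μ₀ ≤ (1−s)·(1/2)·∫_ℝ δ(u,x,te)/|t|^{1+2s} dt ≤ μ₁. -/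
open MeasureTheory

theorem core_int {W : Type*} [NormedAddCommGroup W] [InnerProductSpace ℝ W]
    [FiniteDimensional ℝ W] [MeasurableSpace W] [BorelSpace W] (q a : ℝ) (ha : 0 < a)
    (hq : (Module.finrank ℝ W : ℝ) / 2 < q) :
    Integrable (fun z : W => (a + ‖z‖ ^ 2) ^ (-q)) ∧
    ∫ z : W, (a + ‖z‖ ^ 2) ^ (-q) =
      Real.pi ^ ((Module.finrank ℝ W : ℝ) / 2) * Real.Gamma (q - (Module.finrank ℝ W : ℝ) / 2) /
        Real.Gamma q * a ^ ((Module.finrank ℝ W : ℝ) / 2 - q) := by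
  set k : ℝ := (Module.finrank ℝ W : ℝ) / 2 with hk
  have hk0 : 0 ≤ k := by positivity
  have hq0 : 0 < q := by linarith
  have hG : 0 < Real.Gamma q := Real.Gamma_pos_of_pos hq0
  have hG2 : 0 < Real.Gamma (q - k) := Real.Gamma_pos_of_pos (by linarith)
  let f : ℝ × W → ℝ := fun p => p.1 ^ (q - 1) * Real.exp (-((a + ‖p.2‖ ^ 2) * p.1))
  have hfm : Measurable f := by fun_prop
  have hgauss : ∀ b : ℝ, 0 < b → Integrable (fun z : W => Real.exp (-b * ‖z‖ ^ 2)) := by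
    intro b hb
    apply Integrable.of_integral_ne_zero
    rw [GaussianFourier.integral_rexp_neg_mul_sq_norm hb]
    positivity
  have hsplit : ∀ t : ℝ, ∀ z : W, f (t, z) =
      (t ^ (q - 1) * Real.exp (-(a * t))) * Real.exp (-t * ‖z‖ ^ 2) := by
    intro t z
    simp only [f]
    rw [mul_assoc, ← Real.exp_add]
    congr 2; ring
  have hfpos : ∀ t : ℝ, 0 < t → ∀ z : W, 0 ≤ f (t, z) := by
    intro t ht z; simp only [f]; positivity
  have hinner : ∀ t : ℝ, 0 < t → ∫ z : W, f (t, z) =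
      Real.pi ^ k * (t ^ ((q - k) - 1) * Real.exp (-(a * t))) := by
    intro t ht
    simp_rw [hsplit]
    rw [integral_const_mul, GaussianFourier.integral_rexp_neg_mul_sq_norm ht, ← hk,
      Real.div_rpow Real.pi_pos.le ht.le, show q - k - 1 = (q - 1) - k by ring,
      Real.rpow_sub ht (q - 1) k]
    ring
  have hval : ∫ t in Set.Ioi (0:ℝ), Real.pi ^ k * (t ^ ((q - k) - 1) * Real.exp (-(a * t))) =
      Real.pi ^ k * ((1 / a) ^ (q - k) * Real.Gamma (q - k)) := by
    rw [integral_const_mul, Real.integral_rpow_mul_exp_neg_mul_Ioi (by linarith) ha]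
  have hint1 : Integrable (fun t => Real.pi ^ k * (t ^ ((q - k) - 1) * Real.exp (-(a * t))))
      (volume.restrict (Set.Ioi (0:ℝ))) := by
    apply Integrable.of_integral_ne_zero
    rw [hval]
    positivity
  have hfi : Integrable f ((volume.restrict (Set.Ioi (0:ℝ))).prod (volume : Measure W)) := by
    rw [integrable_prod_iff hfm.aestronglyMeasurable]
    refine ⟨?_, ?_⟩
    · filter_upwards [ae_restrict_mem measurableSet_Ioi] with t ht
      simp_rw [hsplit]
      exact (hgauss t ht).const_mul _
    · refine hint1.congr ?_
      filter_upwards [ae_restrict_mem measurableSet_Ioi] with t ht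
      rw [← hinner t ht]
      refine integral_congr_ae (Filter.Eventually.of_forall fun z => ?_)
      exact (Real.norm_of_nonneg (hfpos t ht z)).symm
  have hother : ∀ z : W, ∫ t in Set.Ioi (0:ℝ), f (t, z) =
      (a + ‖z‖ ^ 2) ^ (-q) * Real.Gamma q := by
    intro z
    simp only [f]
    rw [Real.integral_rpow_mul_exp_neg_mul_Ioi hq0 (by positivity), one_div,
      Real.inv_rpow (by positivity), Real.rpow_neg (by positivity)]
  have hsw := integral_integral_swap (f := fun t z => f (t, z)) hfi
  have hr := hfi.integral_prod_right
  simp_rw [hother] at hsw hr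
  constructor
  · have := hr.mul_const (Real.Gamma q)⁻¹
    refine this.congr (Filter.Eventually.of_forall fun z => ?_)
    simp only
    field_simp
  · rw [integral_mul_const] at hsw
    rw [setIntegral_congr_fun measurableSet_Ioi (fun t ht => hinner t ht), hval] at hsw
    rw [show k - q = -(q - k) by ring, Real.rpow_neg ha.le, ← Real.inv_rpow ha.le, ← one_div]
    field_simp
    linarith

theorem rad1 (s L C : ℝ) (hs : 1 / 2 < s) (hs1 : s < 1) (hL : 0 < L) (hC : 0 < C) :
    IntegrableOn (fun r : ℝ => min (C * r ^ 2) (2 * L * r) * r ^ (-(1 + 2 * s))) (Set.Ioi 0) ∧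
    (1 - s) * ∫ r in Set.Ioi (0:ℝ), min (C * r ^ 2) (2 * L * r) * r ^ (-(1 + 2 * s))
      = mu1 s L C := by
  set f := (fun r : ℝ => min (C * r ^ 2) (2 * L * r) * r ^ (-(1 + 2 * s)))
  set R : ℝ := 2 * L / C with hR
  have hR0 : 0 < R := by positivity
  have h1 : ∀ r ∈ Set.Ioc 0 R, C * r ^ (1 - 2 * s) = f r := by
    rintro r ⟨h0, h1⟩
    have : C * r ^ 2 ≤ 2 * L * r := by
      rw [hR, le_div_iff₀ hC] at h1
      nlinarith
    simp only [f]
    rw [min_eq_left this, mul_assoc, ← Real.rpow_natCast, ← Real.rpow_add h0]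
    congr 2; push_cast; ring
  have h2 : ∀ r ∈ Set.Ioi R, 2 * L * r ^ (-2 * s) = f r := by
    intro r h1
    have h1 : R < r := h1
    have h0 : 0 < r := hR0.trans h1
    have : 2 * L * r ≤ C * r ^ 2 := by
      rw [hR, div_lt_iff₀ hC] at h1
      nlinarith
    simp only [f]
    rw [min_eq_right this, mul_assoc (2 * L) r]
    have : r * r ^ (-(1 + 2 * s)) = r ^ (1 + -(1 + 2 * s)) := by
      rw [Real.rpow_add h0, Real.rpow_one]
    rw [this]
    congr 2; ring
  have i1' : IntegrableOn (fun r : ℝ => C * r ^ (1 - 2 * s)) (Set.Ioc 0 R) := by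
    have := (intervalIntegral.intervalIntegrable_rpow' (a := 0) (b := R) (r := 1 - 2 * s)
      (by linarith))
    rw [intervalIntegrable_iff_integrableOn_Ioc_of_le hR0.le] at this
    exact this.const_mul C
  have i2' : IntegrableOn (fun r : ℝ => 2 * L * r ^ (-2 * s)) (Set.Ioi R) :=
    (integrableOn_Ioi_rpow_of_lt (by linarith) hR0).const_mul _
  have i1 : IntegrableOn f (Set.Ioc 0 R) := i1'.congr_fun h1 measurableSet_Ioc
  have i2 : IntegrableOn f (Set.Ioi R) := i2'.congr_fun h2 measurableSet_Ioi
  have hu : Set.Ioi (0:ℝ) = Set.Ioc 0 R ∪ Set.Ioi R := (Set.Ioc_union_Ioi_eq_Ioi hR0.le).symm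
  rw [hu]
  refine ⟨i1.union i2, ?_⟩
  rw [setIntegral_union (by
      rw [Set.disjoint_left]; rintro r ⟨_, h⟩ h'; exact absurd h' (not_lt.mpr h))
      measurableSet_Ioi i1 i2,
    ← setIntegral_congr_fun measurableSet_Ioc h1, ← setIntegral_congr_fun measurableSet_Ioi h2,
    integral_const_mul, integral_const_mul, integral_Ioi_rpow_of_lt (by linarith) hR0,
    ← intervalIntegral.integral_of_le hR0.le, integral_rpow (Or.inl (by linarith)),
    Real.zero_rpow (by linarith)]
  have e1 : R ^ (1 - 2 * s + 1) = R ^ (1 - 2 * s) * R := Real.rpow_add_one hR0.ne' _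
  have e2 : -2 * s + 1 = 1 - 2 * s := by ring
  rw [e1, e2]
  have hx : R ^ (1 - 2 * s) * L = L ^ (2 - 2 * s) * (C / 2) ^ (2 * s - 1) := by
    rw [show R = L / (C / 2) by rw [hR]; field_simp, Real.div_rpow hL.le (by positivity),
      show (2 - 2 * s) = (1 - 2 * s) + 1 by ring, Real.rpow_add_one hL.ne',
      show 2 * s - 1 = -(1 - 2 * s) by ring, Real.rpow_neg (by positivity)]
    field_simp
  have hCR : C * R = 2 * L := by rw [hR]; field_simp
  rw [mu1, ← hx]
  set P := R ^ (1 - 2 * s)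
  have d1 : 1 - 2 * s + 1 ≠ 0 := by linarith
  have d2 : 1 - 2 * s ≠ 0 := by linarith
  have d3 : 2 * s - 1 ≠ 0 := by linarith
  have : C * ((P * R - 0) / (1 - 2 * s + 1)) = 2 * L * P / (1 - 2 * s + 1) := by
    rw [← hCR]; ring
  rw [this]
  have : -P / (1 - 2 * s) = P / (2 * s - 1) := by
    rw [div_eq_div_iff d2 d3]; ring
  rw [this]
  have d4 : 1 - s ≠ 0 := by linarith
  rw [show 1 - 2 * s + 1 = 2 * (1 - s) by ring]
  have : (1 - s) * (2 * L * P / (2 * (1 - s)) + 2 * L * (P / (2 * s - 1))) =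
      L * P + 2 * (1 - s) * L * P / (2 * s - 1) := by
    rw [mul_add, show (1 - s) * (2 * L * P / (2 * (1 - s))) = L * P by field_simp]
    ring
  rw [this, eq_div_iff d3, add_mul, div_mul_cancel₀ _ d3]
  ring

theorem rad_int {W : Type*} [NormedAddCommGroup W] [InnerProductSpace ℝ W]
    [FiniteDimensional ℝ W] [MeasurableSpace W] [BorelSpace W] [Nontrivial W] (s L C : ℝ)
    (hs : 1 / 2 < s) (hs1 : s < 1) (hL : 0 < L) (hC : 0 < C) :
    Integrable (fun z : W => min (C * ‖z‖ ^ 2) (2 * L * ‖z‖) *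
      ‖z‖ ^ (-((Module.finrank ℝ W : ℝ) + 2 * s))) ∧
    (1 - s) * ∫ z : W, min (C * ‖z‖ ^ 2) (2 * L * ‖z‖) *
      ‖z‖ ^ (-((Module.finrank ℝ W : ℝ) + 2 * s)) =
      surfOmega (Module.finrank ℝ W) * mu1 s L C := by
  obtain ⟨h1, h2⟩ := rad1 s L C hs hs1 hL hC
  have hk : 0 < Module.finrank ℝ W := Module.finrank_pos
  set k := Module.finrank ℝ W with hkd
  let f : ℝ → ℝ := fun r => min (C * r ^ 2) (2 * L * r) * r ^ (-((k : ℝ) + 2 * s))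
  have hcong : ∀ r ∈ Set.Ioi (0:ℝ), min (C * r ^ 2) (2 * L * r) * r ^ (-(1 + 2 * s)) =
      r ^ (k - 1) • f r := by
    intro r hr
    have hr : 0 < r := hr
    simp only [f, smul_eq_mul]
    rw [mul_left_comm, ← Real.rpow_natCast r (k - 1), ← Real.rpow_add hr]
    congr 2
    rw [Nat.cast_sub hk]; push_cast; ring
  have hI : IntegrableOn (fun r : ℝ => r ^ (k - 1) • f r) (Set.Ioi 0) :=
    h1.congr_fun hcong measurableSet_Ioi
  refine ⟨(integrable_fun_norm_addHaar (volume : Measure W) (f := f)).mpr hI, ?_⟩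
  have := integral_fun_norm_addHaar (volume : Measure W) f
  simp only [f] at this
  rw [this, ← hkd]
  rw [setIntegral_congr_fun measurableSet_Ioi hcong] at h2
  simp only [f] at h2
  rw [← h2, Measure.real, InnerProductSpace.volume_ball, ← hkd]
  have hGk : Real.Gamma ((k:ℝ) / 2 + 1) = (k : ℝ) / 2 * Real.Gamma ((k:ℝ) / 2) :=
    Real.Gamma_add_one (by positivity)
  have hGp : 0 < Real.Gamma ((k:ℝ) / 2) := Real.Gamma_pos_of_pos (by positivity)
  have hk' : (0:ℝ) < k := by exact_mod_cast hk
  rw [hGk]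
  simp only [ENNReal.ofReal_one, one_pow, one_mul, smul_eq_mul, nsmul_eq_mul]
  rw [ENNReal.toReal_ofReal (by positivity), surfOmega]
  have : √Real.pi ^ k = Real.pi ^ ((k : ℝ) / 2) := by
    rw [Real.sqrt_eq_rpow, ← Real.rpow_natCast, ← Real.rpow_mul Real.pi_pos.le]
    congr 1; ring
  rw [this]
  set J := ∫ (y : ℝ) in Set.Ioi 0, y ^ (k - 1) * (min (C * y ^ 2) (2 * L * y) *
    y ^ (-((k:ℝ) + 2 * s)))
  field_simp

theorem mat_exists (n : ℕ) (hn : 1 ≤ n) (e : EuclideanSpace ℝ (Fin n)) (he : ‖e‖ = 1)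
    (κ l : ℝ) (hκ : 0 < κ) (hl : 0 < l) (hd : l * κ ^ (n - 1) = 1) :
    ∃ A : Matrix (Fin n) (Fin n) ℝ, A.PosDef ∧ A.det = 1 ∧
      ∀ t : ℝ, ∀ z : EuclideanSpace ℝ (Fin n), inner ℝ e z = 0 →
        ‖(EuclideanSpace.equiv (Fin n) ℝ).symm (A⁻¹.mulVec
          (EuclideanSpace.equiv (Fin n) ℝ (t • e + z)))‖ ^ 2 =
          t ^ 2 / l ^ 2 + ‖z‖ ^ 2 / κ ^ 2 := by
  let v : Fin n → ℝ := fun i => e i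
  have hvv : v ⬝ᵥ v = 1 := by
    have := EuclideanSpace.real_norm_sq_eq e
    rw [he] at this
    simp only [dotProduct, v]
    rw [one_pow] at this
    rw [this]; exact Finset.sum_congr rfl fun i _ => (sq _).symm
  let A : Matrix (Fin n) (Fin n) ℝ := κ • (1 : Matrix (Fin n) (Fin n) ℝ) +
    (l - κ) • Matrix.vecMulVec v v
  have hAv : ∀ y : Fin n → ℝ, A.mulVec y = κ • y + ((l - κ) * (v ⬝ᵥ y)) • v := by
    intro y
    simp only [A, Matrix.add_mulVec, Matrix.smul_mulVec, Matrix.one_mulVec, Matrix.vecMulVec_mulVec]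
    ext i; simp; ring
  have hdet : A.det = 1 := by
    have : A = κ • (1 + Matrix.replicateCol Unit (((l - κ) / κ) • v) * Matrix.replicateRow Unit v) := by
      ext i j
      simp [A, Matrix.mul_apply, Matrix.vecMulVec_apply]
      field_simp
    rw [this, Matrix.det_smul, Matrix.det_one_add_replicateCol_mul_replicateRow, dotProduct_smul,
      hvv, Fintype.card_fin, smul_eq_mul]
    obtain ⟨m, rfl⟩ : ∃ m, n = m + 1 := ⟨n - 1, by omega⟩
    simp only [Nat.add_sub_cancel] at hd
    rw [pow_succ, mul_assoc]
    have : κ * (1 + (l - κ) / κ * 1) = l := by field_simp; ring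
    rw [this, mul_comm, hd]
  refine ⟨A, ?_, hdet, ?_⟩
  · refine Matrix.PosDef.of_dotProduct_mulVec_pos ?_ ?_
    · ext i j
      simp [A, Matrix.vecMulVec_apply, Matrix.one_apply, eq_comm, mul_comm]
    · intro y hy
      rw [hAv]
      have hcs : (v ⬝ᵥ y) ^ 2 ≤ (v ⬝ᵥ v) * (y ⬝ᵥ y) := by
        have := Finset.sum_mul_sq_le_sq_mul_sq Finset.univ v y
        simpa [dotProduct, sq] using this
      rw [hvv, one_mul] at hcs
      have hy0 : 0 < y ⬝ᵥ y := by
        have h0 : 0 ≤ y ⬝ᵥ y := Finset.sum_nonneg fun i _ => mul_self_nonneg _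
        refine lt_of_le_of_ne h0 fun h => hy (dotProduct_self_eq_zero.mp h.symm)
      simp only [star_trivial, dotProduct_add, dotProduct_smul, smul_eq_mul]
      rw [dotProduct_comm y v]
      have : 0 < κ * (y ⬝ᵥ y - (v ⬝ᵥ y) ^ 2) + l * (v ⬝ᵥ y) ^ 2 := by
        rcases hcs.lt_or_eq with h | h
        · have := mul_pos hκ (sub_pos.mpr h)
          positivity
        · rw [h]; simp; positivity
      nlinarith
  · intro t z hz
    have hvz : v ⬝ᵥ (fun i => z i) = 0 := by
      rw [← hz, PiLp.inner_apply]
      simp [dotProduct, v, mul_comm]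
    have h1 : A.mulVec ((t / l) • v + κ⁻¹ • (fun i => z i)) =
        EuclideanSpace.equiv (Fin n) ℝ (t • e + z) := by
      rw [hAv, dotProduct_add, dotProduct_smul, dotProduct_smul, hvv, hvz]
      ext i
      simp [v]
      field_simp
      ring
    rw [← h1, Matrix.mulVec_mulVec, Matrix.nonsing_inv_mul _ (by rw [hdet]; exact isUnit_one),
      Matrix.one_mulVec]
    have h2 : (EuclideanSpace.equiv (Fin n) ℝ).symm ((t / l) • v + κ⁻¹ • (fun i => z i)) =
        (t / l) • e + κ⁻¹ • z := by
      ext i; simp [v]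
    rw [h2, norm_add_sq_real, inner_smul_left, inner_smul_right, hz, norm_smul, norm_smul, he]
    simp [mul_pow, div_pow]
    field_simp

theorem decomp {E : Type*} [NormedAddCommGroup E] [InnerProductSpace ℝ E]
    [FiniteDimensional ℝ E] [MeasurableSpace E] [BorelSpace E] (e : E) (he : ‖e‖ = 1) :
    MeasurePreserving (fun p : ℝ × (ℝ ∙ e)ᗮ => p.1 • e + (p.2 : E)) ∧
    MeasurableEmbedding (fun p : ℝ × (ℝ ∙ e)ᗮ => p.1 • e + (p.2 : E)) := by
  let T := LinearIsometryEquiv.toSpanUnitSingleton (𝕜 := ℝ) e he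
  have h1 : MeasurePreserving (Prod.map T (id : (ℝ ∙ e)ᗮ → (ℝ ∙ e)ᗮ)) :=
    T.measurePreserving.prod (MeasurePreserving.id _)
  have h2 := WithLp.volume_preserving_toLp (ℝ ∙ e) ((ℝ ∙ e)ᗮ)
  have h3 := (ℝ ∙ e).orthogonalDecomposition.symm.measurePreserving
  have h := h3.comp (h2.comp h1)
  have heq : (fun p : ℝ × (ℝ ∙ e)ᗮ => p.1 • e + (p.2 : E)) =
      (ℝ ∙ e).orthogonalDecomposition.symm ∘ (WithLp.toLp 2) ∘
      (Prod.map T (id : (ℝ ∙ e)ᗮ → (ℝ ∙ e)ᗮ)) := by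
    ext p
    simp [T]
  refine ⟨heq ▸ h, ?_⟩
  rw [heq]
  have e1 : MeasurableEmbedding (Prod.map T (id : (ℝ ∙ e)ᗮ → (ℝ ∙ e)ᗮ)) :=
    MeasurableEmbedding.prodMap T.toHomeomorph.measurableEmbedding MeasurableEmbedding.id
  exact ((ℝ ∙ e).orthogonalDecomposition.symm.toHomeomorph.measurableEmbedding).comp
    ((MeasurableEquiv.toLp 2 _).measurableEmbedding.comp e1)

theorem ker_int {W : Type*} [NormedAddCommGroup W] [InnerProductSpace ℝ W]
    [FiniteDimensional ℝ W] [MeasurableSpace W] [BorelSpace W] (q a b τ : ℝ) (ha : 0 < a)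
    (hb : 0 < b) (hτ : 0 < τ) (hq : (Module.finrank ℝ W : ℝ) / 2 < q) :
    Integrable (fun z : W => (τ ^ 2 / a ^ 2 + ‖z‖ ^ 2 / b ^ 2) ^ (-q)) ∧
    ∫ z : W, (τ ^ 2 / a ^ 2 + ‖z‖ ^ 2 / b ^ 2) ^ (-q) =
      b ^ (Module.finrank ℝ W : ℝ) * a ^ (2 * q - (Module.finrank ℝ W : ℝ)) *
      (Real.pi ^ ((Module.finrank ℝ W : ℝ) / 2) * Real.Gamma (q - (Module.finrank ℝ W : ℝ) / 2) /
        Real.Gamma q) * τ ^ (-(2 * q - (Module.finrank ℝ W : ℝ))) := by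
  have hA : 0 < (b * τ / a) ^ 2 := by positivity
  obtain ⟨h1, h2⟩ := core_int (W := W) q _ hA hq
  set k : ℝ := (Module.finrank ℝ W : ℝ) with hk
  have hcong : ∀ z : W, (τ ^ 2 / a ^ 2 + ‖z‖ ^ 2 / b ^ 2) ^ (-q) =
      b ^ (2 * q) * ((b * τ / a) ^ 2 + ‖z‖ ^ 2) ^ (-q) := by
    intro z
    have : τ ^ 2 / a ^ 2 + ‖z‖ ^ 2 / b ^ 2 = ((b * τ / a) ^ 2 + ‖z‖ ^ 2) * (b ^ 2)⁻¹ := by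
      field_simp
    rw [this, Real.mul_rpow (by positivity) (by positivity), Real.inv_rpow (by positivity),
      Real.rpow_neg (by positivity : (0:ℝ) ≤ b ^ 2), inv_inv, Real.rpow_mul hb.le,
      Real.rpow_two, mul_comm]
  simp_rw [hcong]
  refine ⟨h1.const_mul _, ?_⟩
  rw [integral_const_mul, h2]
  have : ((b * τ / a) ^ 2) ^ (k / 2 - q) = b ^ (k - 2 * q) * τ ^ (-(2 * q - k)) * a ^ (2 * q - k) := by
    rw [← Real.rpow_two, ← Real.rpow_mul (by positivity), Real.div_rpow (by positivity) ha.le,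
      Real.mul_rpow hb.le hτ.le, show 2 * (k / 2 - q) = k - 2 * q by ring,
      show 2 * q - k = - (k - 2 * q) by ring, Real.rpow_neg ha.le, neg_neg]
    field_simp
  rw [this]
  have : b ^ (2 * q) * b ^ (k - 2 * q) = b ^ k := by
    rw [← Real.rpow_add hb]; congr 1; ring
  rw [← this]
  ring

theorem abs_main {V : Type*} [NormedAddCommGroup V] [InnerProductSpace ℝ V]
    [FiniteDimensional ℝ V] [MeasurableSpace V] [BorelSpace V] [Nontrivial V]
    (s L C κ l : ℝ) (d : ℕ) (hd : Module.finrank ℝ V = d)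
    (hs : 1 / 2 < s) (hs1 : s < 1) (hL : 0 < L) (hC : 0 < C) (hκ : 0 < κ) (hl : 0 < l)
    (hlk : l * κ ^ d = 1) (F : ℝ × V → ℝ) (g : ℝ → ℝ) (hgm : Measurable g)
    (hg : ∀ t, g t ≤ min (C * ‖t‖ ^ 2) (2 * L * ‖t‖))
    (hF : ∀ t z, F (t, z) + F (t, -z) ≤ 2 * (g t + min (C * ‖z‖ ^ 2) (2 * L * ‖z‖)))
    (hFi : Integrable (fun p : ℝ × V => F p *
      (p.1 ^ 2 / l ^ 2 + ‖p.2‖ ^ 2 / κ ^ 2) ^ (-(((d : ℝ) + 1) / 2 + s)))) :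
    Integrable (fun t : ℝ => g t * ‖t‖ ^ (-(1 + 2 * s))) ∧
    (1 - s) * (1 / 2 * ∫ p : ℝ × V, F p *
      (p.1 ^ 2 / l ^ 2 + ‖p.2‖ ^ 2 / κ ^ 2) ^ (-(((d : ℝ) + 1) / 2 + s))) ≤
    l ^ (2 * s) * (Real.pi ^ ((d : ℝ) / 2) * Real.Gamma (s + 1 / 2) /
        Real.Gamma (((d : ℝ) + 1) / 2 + s)) *
        ((1 - s) * (1 / 2 * ∫ t : ℝ, g t * ‖t‖ ^ (-(1 + 2 * s)))) +
    κ ^ (2 * s) * ((√Real.pi * Real.Gamma ((d : ℝ) / 2 + s) /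
        Real.Gamma (((d : ℝ) + 1) / 2 + s)) * (mu1 s L C * surfOmega d / 2)) := by
  set q : ℝ := ((d : ℝ) + 1) / 2 + s with hq
  let K : ℝ × V → ℝ := fun p => (p.1 ^ 2 / l ^ 2 + ‖p.2‖ ^ 2 / κ ^ 2) ^ (-q)
  let m : V → ℝ := fun z => min (C * ‖z‖ ^ 2) (2 * L * ‖z‖)
  let m1 : ℝ → ℝ := fun t => min (C * ‖t‖ ^ 2) (2 * L * ‖t‖)
  set Pd : ℝ := Real.pi ^ ((d : ℝ) / 2) * Real.Gamma (s + 1 / 2) / Real.Gamma q with hPd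
  set P1 : ℝ := √Real.pi * Real.Gamma ((d : ℝ) / 2 + s) / Real.Gamma q with hP1
  have hq0 : 0 < q := by positivity
  have hGq : 0 < Real.Gamma q := Real.Gamma_pos_of_pos hq0
  have hPd0 : 0 < Pd := by
    have : 0 < Real.Gamma (s + 1 / 2) := Real.Gamma_pos_of_pos (by linarith)
    positivity
  have hK0 : ∀ p, 0 ≤ K p := fun p => Real.rpow_nonneg (by positivity) _
  have hm0 : ∀ z, 0 ≤ m z := fun z => by simp only [m]; positivity
  have hm10 : ∀ z, 0 ≤ m1 z := fun z => by simp only [m1]; positivity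
  have hKm : Measurable K := by simp only [K]; fun_prop
  have hmm : Measurable m := by simp only [m]; fun_prop
  have hm1m : Measurable m1 := by simp only [m1]; fun_prop
  have hldk : l ^ (1 + 2 * s) * κ ^ d = l ^ (2 * s) := by
    rw [Real.rpow_add hl, Real.rpow_one, mul_right_comm, hlk, one_mul]
  -- inner integral in z
  have hz : ∀ t : ℝ, t ≠ 0 → Integrable (fun z : V => K (t, z)) ∧
      ∫ z : V, K (t, z) = (l ^ (2 * s) * Pd) * ‖t‖ ^ (-(1 + 2 * s)) := by
    intro t ht
    have hτ : 0 < ‖t‖ := norm_pos_iff.mpr ht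
    have := ker_int (W := V) q l κ ‖t‖ hl hκ hτ (by rw [hd, hq]; linarith)
    rw [hd] at this
    have e1 : ∀ z : V, K (t, z) = (‖t‖ ^ 2 / l ^ 2 + ‖z‖ ^ 2 / κ ^ 2) ^ (-q) := by
      intro z; simp only [K]; rw [Real.norm_eq_abs, sq_abs]
    simp_rw [e1]
    refine ⟨this.1, ?_⟩
    rw [this.2, show 2 * q - d = 1 + 2 * s by rw [hq]; ring,
      show q - (d:ℝ) / 2 = s + 1 / 2 by rw [hq]; ring, ← hldk, Real.rpow_natCast]
    ring
  -- inner integral in t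
  have ht : ∀ z : V, z ≠ 0 → Integrable (fun t : ℝ => K (t, z)) ∧
      ∫ t : ℝ, K (t, z) = (κ ^ (2 * s) * P1) * ‖z‖ ^ (-((d : ℝ) + 2 * s)) := by
    intro z hz
    have hτ : 0 < ‖z‖ := norm_pos_iff.mpr hz
    have := ker_int (W := ℝ) q κ l ‖z‖ hκ hl hτ (by
      rw [Module.finrank_self, hq]; push_cast; have : (0:ℝ) ≤ d := by positivity
      linarith)
    rw [Module.finrank_self] at this
    have e1 : ∀ t : ℝ, K (t, z) = (‖z‖ ^ 2 / κ ^ 2 + ‖t‖ ^ 2 / l ^ 2) ^ (-q) := by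
      intro t; simp only [K]; rw [Real.norm_eq_abs, sq_abs, add_comm]
    simp_rw [e1]
    refine ⟨this.1, ?_⟩
    have e2 : κ ^ ((d:ℝ) + 2 * s) = κ ^ d * κ ^ (2 * s) := by
      rw [Real.rpow_add hκ, Real.rpow_natCast]
    rw [this.2]
    push_cast
    rw [show 2 * q - 1 = d + 2 * s by rw [hq]; ring,
      show q - 1 / 2 = (d:ℝ) / 2 + s by rw [hq]; ring, Real.rpow_one, e2, ← Real.sqrt_eq_rpow,
      ← mul_assoc l, hlk, one_mul]
  have hz0 : ∀ᵐ z : V, z ≠ 0 := by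
    simp [ae_iff]
  have ht0 : ∀ᵐ t : ℝ, t ≠ 0 := by
    simp [ae_iff]
  obtain ⟨r1, r2⟩ := rad_int (W := V) s L C hs hs1 hL hC
  rw [hd] at r1 r2
  obtain ⟨r3, -⟩ := rad_int (W := ℝ) s L C hs hs1 hL hC
  rw [Module.finrank_self, Nat.cast_one] at r3
  -- K m(z)
  have iKm : Integrable (fun p : ℝ × V => K p * m p.2) := by
    rw [Measure.volume_eq_prod, integrable_prod_iff' (by fun_prop)]
    refine ⟨?_, ?_⟩
    · filter_upwards [hz0] with z hz
      exact (ht z hz).1.mul_const _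
    · refine (r1.const_mul (κ ^ (2 * s) * P1)).congr ?_
      filter_upwards [hz0] with z hz
      have : ∀ t : ℝ, ‖K (t, z) * m z‖ = K (t, z) * m z := fun t =>
        Real.norm_of_nonneg (mul_nonneg (hK0 _) (hm0 _))
      simp_rw [this]
      rw [integral_mul_const, (ht z hz).2]
      simp only [m]
      ring
  have vKm : (1 - s) * ∫ p : ℝ × V, K p * m p.2 =
      (κ ^ (2 * s) * P1) * (surfOmega d * mu1 s L C) := by
    rw [Measure.volume_eq_prod, integral_prod_symm _ iKm, ← r2, mul_left_comm (κ ^ (2 * s) * P1)]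
    congr 1
    rw [← integral_const_mul]
    refine integral_congr_ae ?_
    filter_upwards [hz0] with z hz
    rw [integral_mul_const, (ht z hz).2]
    simp only [m]
    ring
  have iKm1 : Integrable (fun p : ℝ × V => K p * m1 p.1) := by
    rw [Measure.volume_eq_prod, integrable_prod_iff (by fun_prop)]
    refine ⟨?_, ?_⟩
    · filter_upwards [ht0] with t ht
      exact (hz t ht).1.mul_const _
    · refine (r3.const_mul (l ^ (2 * s) * Pd)).congr ?_
      filter_upwards [ht0] with t ht
      have : ∀ z : V, ‖K (t, z) * m1 t‖ = K (t, z) * m1 t := fun z =>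
        Real.norm_of_nonneg (mul_nonneg (hK0 _) (hm10 _))
      simp_rw [this]
      rw [integral_mul_const, (hz t ht).2]
      simp only [m1]
      ring
  -- reflection
  let ρ : ℝ × V → ℝ × V := Prod.map id (LinearIsometryEquiv.neg ℝ (E := V))
  have hρ : MeasurePreserving ρ :=
    (MeasurePreserving.id _).prod (LinearIsometryEquiv.neg ℝ (E := V)).measurePreserving
  have hρe : MeasurableEmbedding ρ :=
    MeasurableEmbedding.prodMap MeasurableEmbedding.id
      (LinearIsometryEquiv.neg ℝ (E := V)).toHomeomorph.measurableEmbedding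
  have hρa : ∀ p, ρ p = (p.1, -p.2) := fun p => by simp [ρ, Prod.map]
  have hKρ : ∀ p, K (ρ p) = K p := fun p => by simp [K, hρa]
  have iF2 : Integrable (fun p : ℝ × V => F (ρ p) * K p) := by
    have := (hρ.integrable_comp_emb hρe (g := fun p => F p * K p)).mpr hFi
    simpa only [Function.comp_def, hKρ] using this
  have vF2 : ∫ p : ℝ × V, F (ρ p) * K p = ∫ p : ℝ × V, F p * K p := by
    have := hρ.integral_comp hρe (fun p => F p * K p)
    simpa only [hKρ] using this
  have hFi' : Integrable (fun p : ℝ × V => F p * K p) := hFi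
  have key : ∀ p : ℝ × V, 1 / 2 * (F p * K p + F (ρ p) * K p) ≤ K p * g p.1 + K p * m p.2 := by
    intro p
    have h1 := hF p.1 p.2
    rw [hρa]
    have := mul_le_mul_of_nonneg_right h1 (hK0 p)
    simp only [Prod.mk.eta] at this
    simp only [m]
    linarith
  have iG : Integrable (fun p : ℝ × V => 1 / 2 * (F p * K p + F (ρ p) * K p)) :=
    (hFi'.add iF2).const_mul _
  have iKg : Integrable (fun p : ℝ × V => K p * g p.1) := by
    refine Integrable.mono' (g := fun p => 2 * (K p * m1 p.1) + K p * m p.2 -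
      1 / 2 * (F p * K p + F (ρ p) * K p)) (((iKm1.const_mul 2).add iKm).sub iG)
      (by fun_prop) (Filter.Eventually.of_forall fun p => ?_)
    have h1 := key p
    have h2 : K p * g p.1 ≤ K p * m1 p.1 := mul_le_mul_of_nonneg_left (hg p.1) (hK0 p)
    have h3 : 0 ≤ K p * m1 p.1 := mul_nonneg (hK0 _) (hm10 _)
    have h4 : 0 ≤ K p * m p.2 := mul_nonneg (hK0 _) (hm0 _)
    rw [Real.norm_eq_abs, abs_le]
    constructor <;> linarith
  have hcg : (fun t : ℝ => ∫ z : V, K (t, z) * g t) =ᵐ[volume]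
      fun t => (l ^ (2 * s) * Pd) * (g t * ‖t‖ ^ (-(1 + 2 * s))) := by
    filter_upwards [ht0] with t ht
    rw [integral_mul_const, (hz t ht).2]
    ring
  have hl0 : 0 < l ^ (2 * s) * Pd := by positivity
  refine ⟨?_, ?_⟩
  · have h1 := iKg.integral_prod_left
    have h2 := (h1.congr hcg).const_mul (l ^ (2 * s) * Pd)⁻¹
    refine h2.congr (Filter.Eventually.of_forall fun t => ?_)
    simp only
    rw [inv_mul_cancel_left₀ hl0.ne']
  · have vKg : ∫ p : ℝ × V, K p * g p.1 =
        (l ^ (2 * s) * Pd) * ∫ t : ℝ, g t * ‖t‖ ^ (-(1 + 2 * s)) := by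
      rw [Measure.volume_eq_prod, integral_prod _ iKg, integral_congr_ae hcg, integral_const_mul]
    have hmono := integral_mono iG (iKg.add iKm) key
    simp only [Pi.add_apply] at hmono
    rw [integral_const_mul, integral_add hFi' iF2, integral_add iKg iKm, vF2, vKg] at hmono
    have e : ∫ p : ℝ × V, F p * (p.1 ^ 2 / l ^ 2 + ‖p.2‖ ^ 2 / κ ^ 2) ^ (-q) =
      ∫ p : ℝ × V, F p * K p := rfl
    rw [e]
    have := mul_le_mul_of_nonneg_left hmono (by linarith : 0 ≤ (1 - s) * (1 / 2))
    set I1 := ∫ p : ℝ × V, K p * m p.2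
    set I2 := ∫ p : ℝ × V, F p * K p
    set I3 := ∫ t : ℝ, g t * ‖t‖ ^ (-(1 + 2 * s))
    have h5 : (1 - s) * (1 / 2) * (l ^ (2 * s) * Pd * I3 + I1) =
      l ^ (2 * s) * Pd * ((1 - s) * (1 / 2 * I3)) + 1 / 2 * ((1 - s) * I1) := by ring
    rw [h5, vKm] at this
    linarith

theorem stmt1 (n : ℕ) (hn : 2 ≤ n) (s L C η₀ : ℝ)
    (hs : 1 / 2 < s) (hs1 : s < 1) (hL : 0 < L) (hC : 0 < C) (hη : 0 < η₀)
    (u : EuclideanSpace ℝ (Fin n) → ℝ)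
    (hLip : ∀ a b : EuclideanSpace ℝ (Fin n), |u a - u b| ≤ L * ‖a - b‖)
    (hSC : ∀ a b : EuclideanSpace ℝ (Fin n), delta2 u a b ≤ C * ‖b‖ ^ 2)
    (x : EuclideanSpace ℝ (Fin n))
    (hEll : ∀ A : Matrix (Fin n) (Fin n) ℝ, A.PosDef → A.det = 1 →
      Integrable (fun y => kernelA s A u x y) ∧ η₀ ≤ (1 - s) * LA s A u x) :
    ∀ e : EuclideanSpace ℝ (Fin n), ‖e‖ = 1 →
      Integrable (fun t : ℝ => delta2 u x (t • e) / |t| ^ (1 + 2 * s)) ∧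
      mu0 n s L C η₀ ≤ (1 - s) * (1 / 2 * ∫ t : ℝ, delta2 u x (t • e) / |t| ^ (1 + 2 * s)) ∧
      (1 - s) * (1 / 2 * ∫ t : ℝ, delta2 u x (t • e) / |t| ^ (1 + 2 * s)) ≤ mu1 s L C := by
  intro e he
  obtain ⟨d, rfl⟩ : ∃ d, n = d + 1 := ⟨n - 1, by omega⟩
  have hd1 : 1 ≤ d := by omega
  have hdr : (1:ℝ) ≤ d := by exact_mod_cast hd1
  have hΓ1 : 0 < Real.Gamma ((d : ℝ) / 2) := Real.Gamma_pos_of_pos (by positivity)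
  have hΓ2 : 0 < Real.Gamma ((d : ℝ) / 2 + s) := Real.Gamma_pos_of_pos (by positivity)
  have hΓ3 : 0 < Real.Gamma (((d : ℝ) + 1) / 2 + s) := Real.Gamma_pos_of_pos (by positivity)
  have hΓ4 : 0 < Real.Gamma (s + 1 / 2) := Real.Gamma_pos_of_pos (by positivity)
  have hω : 0 < surfOmega d := by
    unfold surfOmega; positivity
  have hμ : 0 < mu1 s L C := by
    unfold mu1
    have : 0 < 2 * s - 1 := by linarith
    positivity
  have hC1 : C1 (d + 1) s L C = (√Real.pi * Real.Gamma ((d : ℝ) / 2 + s) /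
        Real.Gamma (((d : ℝ) + 1) / 2 + s)) * (mu1 s L C * surfOmega d / 2) := by
    unfold C1; push_cast; simp
  have hC2 : C2 (d + 1) s = Real.pi ^ ((d : ℝ) / 2) * Real.Gamma (s + 1 / 2) /
        Real.Gamma (((d : ℝ) + 1) / 2 + s) := by
    unfold C2 surfOmega
    push_cast
    simp only [add_sub_cancel_right, Nat.add_sub_cancel]
    field_simp
  have hC1p : 0 < C1 (d + 1) s L C := by rw [hC1]; positivity
  have hC2p : 0 < C2 (d + 1) s := by rw [hC2]; positivity
  set X : ℝ := η₀ / 2 / C1 (d + 1) s L C with hX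
  have hXp : 0 < X := by positivity
  set κ : ℝ := X ^ (1 / (2 * s)) with hκd
  have hκ : 0 < κ := by positivity
  have hκs : κ ^ (2 * s) = X := by
    rw [hκd, ← Real.rpow_mul hXp.le]
    rw [one_div_mul_cancel (by linarith), Real.rpow_one]
  set l : ℝ := (κ ^ d)⁻¹ with hld
  have hl : 0 < l := by positivity
  have hls : l ^ (2 * s) = (X ^ d)⁻¹ := by
    rw [hld, Real.inv_rpow (by positivity), ← Real.rpow_natCast, ← Real.rpow_mul hκ.le,
      mul_comm, Real.rpow_mul hκ.le, hκs, Real.rpow_natCast]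
  have hlk : l * κ ^ d = 1 := inv_mul_cancel₀ (by positivity)
  obtain ⟨A, hA1, hA2, hA3⟩ := mat_exists (d + 1) (by omega) e he κ l hκ hl (by simpa using hlk)
  obtain ⟨hI, hη'⟩ := hEll A hA1 hA2
  obtain ⟨hψ, hψe⟩ := decomp e he
  have hfr : Module.finrank ℝ (ℝ ∙ e)ᗮ = d := by
    haveI : Fact (Module.finrank ℝ (EuclideanSpace ℝ (Fin (d + 1))) = d + 1) := ⟨by simp⟩
    exact Submodule.finrank_orthogonal_span_singleton (by
      intro h; rw [h] at he; simp at he)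
  haveI : Nontrivial (ℝ ∙ e)ᗮ := Module.nontrivial_of_finrank_pos (R := ℝ) (by omega)
  have hker : ∀ p : ℝ × (ℝ ∙ e)ᗮ, kernelA s A u x (p.1 • e + (p.2 : EuclideanSpace ℝ (Fin (d + 1)))) =
      delta2 u x (p.1 • e + (p.2 : EuclideanSpace ℝ (Fin (d + 1)))) *
      (p.1 ^ 2 / l ^ 2 + ‖p.2‖ ^ 2 / κ ^ 2) ^ (-(((d : ℝ) + 1) / 2 + s)) := by
    intro p
    have h0 : inner ℝ e (p.2 : EuclideanSpace ℝ (Fin (d + 1))) = 0 :=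
      Submodule.mem_orthogonal_singleton_iff_inner_right.mp p.2.2
    have h1 := hA3 p.1 p.2 h0
    unfold kernelA
    rw [Submodule.coe_norm, ← h1, Real.rpow_neg (by positivity), div_eq_mul_inv]
    congr 2
    rw [← Real.rpow_two, ← Real.rpow_mul (norm_nonneg _)]
    congr 1; push_cast; ring
  have hb : ∀ a b : EuclideanSpace ℝ (Fin (d + 1)),
      delta2 u a b ≤ min (C * ‖b‖ ^ 2) (2 * L * ‖b‖) := by
    intro a b
    refine le_min (hSC a b) ?_
    have h1 := (abs_le.mp (hLip (a + b) a)).2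
    have h2 := (abs_le.mp (hLip (a - b) a)).2
    rw [show a + b - a = b by abel] at h1
    rw [show a - b - a = -b by abel, norm_neg] at h2
    unfold delta2; linarith
  have hucont : Continuous u := by
    have : LipschitzWith (Real.toNNReal L) u := by
      refine LipschitzWith.of_dist_le_mul fun a b => ?_
      rw [Real.dist_eq, dist_eq_norm, Real.coe_toNNReal _ hL.le]
      exact hLip a b
    exact this.continuous
  have hgm : Measurable (fun t : ℝ => delta2 u x (t • e)) := by
    unfold delta2
    exact Continuous.measurable (by fun_prop)
  have hIp : Integrable (fun p : ℝ × (ℝ ∙ e)ᗮ =>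
      delta2 u x (p.1 • e + (p.2 : EuclideanSpace ℝ (Fin (d + 1)))) *
      (p.1 ^ 2 / l ^ 2 + ‖p.2‖ ^ 2 / κ ^ 2) ^ (-(((d : ℝ) + 1) / 2 + s))) := by
    have := (hψ.integrable_comp_emb hψe (g := fun y => kernelA s A u x y)).mpr hI
    simpa only [Function.comp_def, hker] using this
  have hIv := hψ.integral_comp hψe (fun y => kernelA s A u x y)
  simp only [hker] at hIv
  have hg : ∀ t : ℝ, delta2 u x (t • e) ≤ min (C * ‖t‖ ^ 2) (2 * L * ‖t‖) := by
    intro t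
    have := hb x (t • e)
    rwa [norm_smul, he, mul_one] at this
  obtain ⟨m1, m2⟩ := abs_main (V := (ℝ ∙ e)ᗮ) s L C κ l d hfr hs hs1 hL hC hκ hl hlk
    (fun p => delta2 u x (p.1 • e + (p.2 : EuclideanSpace ℝ (Fin (d + 1)))))
    (fun t => delta2 u x (t • e)) hgm hg (by
      intro t z
      have h1 := hb (x + t • e) z
      have h2 := hb (x - t • e) z
      rw [Submodule.coe_norm]
      simp only [Submodule.coe_neg]
      have e1 : x + (t • e + (z : EuclideanSpace ℝ (Fin (d + 1)))) = x + t • e + z := by abel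
      have e2 : x - (t • e + (z : EuclideanSpace ℝ (Fin (d + 1)))) = x - t • e - z := by abel
      have e3 : x + (t • e + -(z : EuclideanSpace ℝ (Fin (d + 1)))) = x + t • e - z := by abel
      have e4 : x - (t • e + -(z : EuclideanSpace ℝ (Fin (d + 1)))) = x - t • e + z := by abel
      unfold delta2 at h1 h2 ⊢
      rw [e1, e2, e3, e4]
      linarith) hIp
  rw [hIv, ← hC1, ← hC2, hκs, hls] at m2
  have hdiv : ∀ t : ℝ, delta2 u x (t • e) / |t| ^ (1 + 2 * s) =
      delta2 u x (t • e) * ‖t‖ ^ (-(1 + 2 * s)) := by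
    intro t
    rw [Real.rpow_neg (norm_nonneg _), div_eq_mul_inv, Real.norm_eq_abs]
  simp_rw [hdiv]
  refine ⟨m1, ?_, ?_⟩
  · set J := (1 - s) * (1 / 2 * ∫ t : ℝ, delta2 u x (t • e) * ‖t‖ ^ (-(1 + 2 * s)))
    have h1 : η₀ ≤ (X ^ d)⁻¹ * C2 (d + 1) s * J + X * C1 (d + 1) s L C := hη'.trans m2
    have h2 : X * C1 (d + 1) s L C = η₀ / 2 := by rw [hX]; field_simp
    have h3 : X ^ d * (η₀ / 2) ≤ C2 (d + 1) s * J := by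
      have h4 : η₀ / 2 ≤ (X ^ d)⁻¹ * (C2 (d + 1) s * J) := by
        rw [← mul_assoc]; linarith
      rwa [le_inv_mul_iff₀ (by positivity)] at h4
    have h5 : mu0 (d + 1) s L C η₀ = (X ^ d * (η₀ / 2)) / C2 (d + 1) s := by
      unfold mu0
      rw [Real.rpow_natCast, show (1 - ((d + 1 : ℕ) : ℝ)) = -(d : ℝ) by push_cast; ring,
        Real.rpow_neg hC1p.le, Real.rpow_natCast]
      have h6 : X ^ d = (η₀ / 2) ^ d / C1 (d + 1) s L C ^ d := by rw [hX, div_pow]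
      rw [h6, pow_succ]
      ring
    rw [h5, div_le_iff₀ hC2p]
    linarith
  · obtain ⟨r1, r2⟩ := rad_int (W := ℝ) s L C hs hs1 hL hC
    rw [Module.finrank_self, Nat.cast_one] at r1 r2
    have hω1 : surfOmega 1 = 2 := by
      unfold surfOmega
      rw [Nat.cast_one, Real.Gamma_one_half_eq, Real.sqrt_eq_rpow, mul_div_assoc, div_self (by positivity),
        mul_one]
    have hm := integral_mono m1 r1 (fun t =>
      mul_le_mul_of_nonneg_right (hg t) (by positivity))
    rw [hω1] at r2
    have := mul_le_mul_of_nonneg_left hm (by linarith : 0 ≤ 1 - s)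
    rw [r2] at this
    linarith
end
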